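/- arXiv:1410.7910 — 2 statements merged into one kernel-verified Lean document; each statement's English description precedes it below -/
import Mathlib

section
/- The number of configurations giving a one-vertex triangulated surface satisfies: |{ω ∈ Ω_N : the permutation ω∘ρ of Fin (3N) has exactly one orbit}| ∼ (2√2/(3N))·(3N/e)^{3N/2} as N → ∞ through values N ≡ 2 (mod 4); that is, the ratio of the left-hand side to the right-hand side tends to 1 along such N. -/
open Filter Real Topology

/-- `Omega N`: the perfect matchings of the `3N` half-edges, i.e. fixed-point-free
involutions of `Fin (3N)`. -/
def Omega (N : ℕ) : Type := {ω : Equiv.Perm (Fin (3 * N)) // ∀ a, ω (ω a) = a ∧ ω a ≠ a}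

/-- The underlying function of `ρ`: the 3-cycle `(3v, 3v+1, 3v+2)` on each block. -/
def rhoFun {N : ℕ} (a : Fin (3 * N)) : Fin (3 * N) :=
  ⟨3 * (a.val / 3) + (a.val + 1) % 3, by have := a.isLt; omega⟩

/-- `ρ`: the permutation of the half-edges acting as the 3-cycle `(3v, 3v+1, 3v+2)`
on each block `B_v`. -/
noncomputable def rho (N : ℕ) : Equiv.Perm (Fin (3 * N)) :=
  Equiv.ofBijective rhoFun
    (Finite.injective_iff_bijective.mp (by
      intro a b h
      have h' := congrArg Fin.val h
      simp only [rhoFun] at h'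
      exact Fin.ext (by omega)))

/-- `ω` encodes a one-vertex (one-puncture) triangulation exactly when the permutation
`ω ∘ ρ` has a single orbit on the half-edges. -/
def OneOrbit {N : ℕ} (ω : Omega N) : Prop :=
  ∀ a b : Fin (3 * N), (ω.val * rho N).SameCycle a b

/-!
Let `P_σ` be the permutation matrix of `σ = ω ∘ ρ` on `n = 3N` half-edges. The diagonal cofactors
of `1 - P_σ` all equal `1` if `σ` is a single cycle; otherwise, they all vanish. Expanding them
in principal minors, `∑_S (n - #S) (-1)^#S sign(σ|S)` is `n` or `0`, where only sets `S` preserved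
by `σ` contribute.

Sum this over all `ω`. If `ρ` enters `S` at two points, conjugating `ω` by their transposition
reverses the sign, so `S` cancels. There remain the unions `F` of triangles, possibly together
with an arc of one or two corners of a further triangle; the one-corner arcs cancel the
contribution of `F`. What is left is an alternating sum of products
`(M choose j) (3j)‼ (3(M - j) + 1)‼` over odd `j`, with `N = M + 1`. Relative to the two extreme
terms, the inner ones are bounded by reciprocals of binomial coefficients, hence negligible; for
`N ≡ 2 (mod 4)` the extreme terms have equal signs and sizes, and Stirling's formula finishes.
-/

namespace OneVertexTriangulation

open Equiv Equiv.Perm Finset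
open scoped Nat symmDiff

section SignOn

variable {X : Type*} {σ τ : Perm X} {S T : Finset X} {a b x z : X}

/-- `S` is a union of cycles of `σ`. -/
abbrev Preserves (σ : Perm X) (S : Finset X) : Prop := ∀ x, σ x ∈ S ↔ x ∈ S

lemma preserves_of_forall_apply_mem (h : ∀ x ∈ S, σ x ∈ S) : Preserves σ S := fun x ↦
  ⟨fun hx ↦ by simpa using perm_symm_on_of_perm_on_finset h hx, h x⟩

lemma Preserves.mul_iff (hσ : Preserves σ S) : Preserves (σ * τ) S ↔ Preserves τ S :=
  forall_congr' fun x ↦ by rw [Perm.mul_apply, hσ (τ x)]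

lemma preserves_congr (h : ∀ x ∈ S, σ x = τ x) : Preserves σ S ↔ Preserves τ S :=
  ⟨fun hσ ↦ preserves_of_forall_apply_mem fun x hx ↦ by rwa [← h x hx, hσ],
    fun hτ ↦ preserves_of_forall_apply_mem fun x hx ↦ by rwa [h x hx, hτ]⟩

lemma Preserves.mem_iff_of_sameCycle (hS : Preserves σ S) (h : σ.SameCycle a b) :
    a ∈ S ↔ b ∈ S := by
  obtain ⟨k, rfl⟩ := h
  induction k with
  | zero => rfl
  | succ k ih => rw [ih, add_comm, zpow_one_add, Perm.mul_apply, hS]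
  | pred k ih =>
    rw [ih, ← hS ((σ ^ (-(k : ℤ) - 1)) a), ← Perm.mul_apply, ← zpow_one_add, add_sub_cancel]

variable [DecidableEq X]

lemma preserves_swap (ha : a ∈ S) (hb : b ∈ S) : Preserves (swap a b) S :=
  preserves_of_forall_apply_mem fun x hx ↦ by rw [swap_apply_def]; split_ifs <;> assumption

variable [Fintype X]

/-- The sign of the restriction of `σ` to `S`, with the value `0` when `σ` does not preserve `S`.
This is the principal minor on `S` of the permutation matrix of `σ`. -/
def signOn (σ : Perm X) (S : Finset X) : ℤ :=
  if h : Preserves σ S then sign (σ.subtypePerm h) else 0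

lemma signOn_of_preserves (h : Preserves σ S) : signOn σ S = sign (σ.subtypePerm h) := dif_pos h

lemma signOn_of_not_preserves (h : ¬ Preserves σ S) : signOn σ S = 0 := dif_neg h

lemma signOn_one : signOn (1 : Perm X) S = 1 := by
  rw [signOn_of_preserves (fun _ ↦ Iff.rfl), subtypePerm_one, Perm.sign_one, Units.val_one]

lemma signOn_congr (h : ∀ x ∈ S, σ x = τ x) : signOn σ S = signOn τ S := by
  by_cases hτ : Preserves τ S
  · rw [signOn_of_preserves ((preserves_congr h).2 hτ), signOn_of_preserves hτ]
    congr 2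
    ext x
    exact h x x.2
  · rw [signOn_of_not_preserves hτ, signOn_of_not_preserves ((preserves_congr h).not.2 hτ)]

lemma signOn_empty : signOn σ ∅ = 1 :=
  (signOn_congr (τ := 1) fun x hx ↦ absurd hx (notMem_empty x)).trans signOn_one

lemma signOn_mul (hσ : Preserves σ S) : signOn (σ * τ) S = signOn σ S * signOn τ S := by
  by_cases hτ : Preserves τ S
  · rw [signOn_of_preserves hσ, signOn_of_preserves hτ, signOn_of_preserves (hσ.mul_iff.2 hτ),
      ← Units.val_mul, ← map_mul, subtypePerm_mul]
  · rw [signOn_of_not_preserves hτ, signOn_of_not_preserves (hσ.mul_iff.not.2 hτ), mul_zero]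

lemma signOn_mul_of_preserves_right (hτ : Preserves τ S) :
    signOn (σ * τ) S = signOn σ S * signOn τ S := by
  by_cases hσ : Preserves σ S
  · exact signOn_mul hσ
  · have hστ : ¬ Preserves (σ * τ) S := fun h ↦ hσ fun x ↦ by
      have hx := h (τ.symm x)
      rwa [← hτ (τ.symm x), Perm.mul_apply, apply_symm_apply] at hx
    rw [signOn_of_not_preserves hσ, signOn_of_not_preserves hστ, zero_mul]

lemma signOn_swap (hab : a ≠ b) (ha : a ∈ S) (hb : b ∈ S) : signOn (swap a b) S = -1 := by
  have hsupp (x : X) (hx : swap a b x ≠ x) : x ∈ S := by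
    rcases eq_or_eq_of_swap_apply_ne_self hx with rfl | rfl <;> assumption
  rw [signOn_of_preserves (preserves_swap ha hb), ← sign_ofSubtype,
    ofSubtype_subtypePerm _ hsupp, sign_swap hab, Units.val_neg, Units.val_one]

lemma signOn_union (hσ : Preserves σ S) (hST : _root_.Disjoint S T) :
    signOn σ (S ∪ T) = signOn σ S * signOn σ T := by
  by_cases hT : Preserves σ T
  · have hST' : Preserves σ (S ∪ T) := fun x ↦ by rw [mem_union, mem_union, hσ, hT]
    rw [signOn_of_preserves hσ, signOn_of_preserves hT, signOn_of_preserves hST',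
      ← sign_ofSubtype, ← sign_ofSubtype (σ.subtypePerm hσ), ← sign_ofSubtype (σ.subtypePerm hT),
      ← Units.val_mul, ← map_mul]
    congr 2
    ext x
    rw [Perm.mul_apply]
    by_cases hxT : x ∈ T
    · rw [ofSubtype_subtypePerm_of_mem hT hxT,
        ofSubtype_subtypePerm_of_mem hST' (mem_union_right S hxT),
        ofSubtype_subtypePerm_of_not_mem hσ (disjoint_right.1 hST ((hT x).2 hxT))]
    · rw [ofSubtype_subtypePerm_of_not_mem hT hxT]
      by_cases hxS : x ∈ S
      · rw [ofSubtype_subtypePerm_of_mem hσ hxS,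
          ofSubtype_subtypePerm_of_mem hST' (mem_union_left T hxS)]
      · rw [ofSubtype_subtypePerm_of_not_mem hσ hxS,
          ofSubtype_subtypePerm_of_not_mem hST' (by simp [hxS, hxT])]
  · have hST' : ¬ Preserves σ (S ∪ T) := fun h ↦ hT fun x ↦ by
      by_cases hx : x ∈ S
      · exact iff_of_false (disjoint_left.1 hST ((hσ x).2 hx)) (disjoint_left.1 hST hx)
      · simpa only [mem_union, hσ x, hx, false_or] using h x
    rw [signOn_of_not_preserves hT, signOn_of_not_preserves hST', mul_zero]

lemma signOn_insert_of_apply_eq (hx : σ x = x) (hxS : x ∉ S) :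
    signOn σ (insert x S) = signOn σ S := by
  have hpres : Preserves σ {x} := preserves_of_forall_apply_mem (by simpa using hx)
  have hone : signOn σ {x} = 1 :=
    (signOn_congr (τ := 1) (by simpa using hx)).trans signOn_one
  rw [insert_eq, signOn_union hpres (disjoint_singleton_left.2 hxS), hone, one_mul]

lemma sign_of_forall_sameCycle [Nonempty X] (h : ∀ a b, σ.SameCycle a b) :
    (sign σ : ℤ) = -(-1) ^ Fintype.card X := by
  rcases subsingleton_or_nontrivial X with hX | hX
  · rw [Subsingleton.elim σ 1, Perm.sign_one,
      Fintype.card_eq_one_iff_nonempty_unique.2 (nonempty_unique X)]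
    simp
  · have hmove (x : X) : σ x ≠ x := fun hx ↦ by
      obtain ⟨y, hy⟩ := exists_ne x
      exact hy ((h x y).eq_of_left hx).symm
    obtain ⟨x⟩ := ‹Nonempty X›
    have hcycle : σ.IsCycle := ⟨x, hmove x, fun y _ ↦ h x y⟩
    have hsupp : σ.support = univ := eq_univ_of_forall fun y ↦ mem_support.2 (hmove y)
    rw [hcycle.sign, hsupp, card_univ]
    simp

/-- The set of elements of the cycle of `σ` through `x`; unlike `(σ.cycleOf x).support`, it is
`{x}` when `x` is a fixed point. -/
def cycleSet (σ : Perm X) (x : X) : Finset X := {y | σ.SameCycle x y}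

lemma mem_cycleSet : b ∈ cycleSet σ a ↔ σ.SameCycle a b := by
  rw [cycleSet, mem_filter_univ]

lemma preserves_cycleSet : Preserves σ (cycleSet σ a) := fun b ↦ by
  rw [mem_cycleSet, mem_cycleSet, sameCycle_apply_right]

lemma signOn_cycleSet : signOn σ (cycleSet σ x) = -(-1) ^ #(cycleSet σ x) := by
  have htrans (a b : {y // y ∈ cycleSet σ x}) :
      (σ.subtypePerm preserves_cycleSet).SameCycle a b := by
    rw [sameCycle_subtypePerm]
    exact (mem_cycleSet.1 a.2).symm.trans (mem_cycleSet.1 b.2)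
  have : Nonempty {y // y ∈ cycleSet σ x} := ⟨x, mem_cycleSet.2 (SameCycle.refl σ x)⟩
  rw [signOn_of_preserves preserves_cycleSet, sign_of_forall_sameCycle htrans, Fintype.card_coe]

lemma neg_one_pow_mul_signOn_union_cycleSet (hSx : _root_.Disjoint S (cycleSet σ x)) :
    (-1) ^ #(S ∪ cycleSet σ x) * signOn σ (S ∪ cycleSet σ x) = -((-1) ^ #S * signOn σ S) := by
  have hsq : ((-1) ^ #(cycleSet σ x) : ℤ) * (-1) ^ #(cycleSet σ x) = 1 := by
    rw [← mul_pow, neg_one_mul, neg_neg, one_pow]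
  rw [card_union_of_disjoint hSx, union_comm, signOn_union preserves_cycleSet hSx.symm,
    signOn_cycleSet]
  linear_combination -((-1) ^ #S * signOn σ S) * hsq

lemma neg_one_pow_mul_signOn_symmDiff_cycleSet (σ : Perm X) (S : Finset X) (x : X) :
    (-1) ^ #(S ∆ cycleSet σ x) * signOn σ (S ∆ cycleSet σ x) = -((-1) ^ #S * signOn σ S) := by
  by_cases hS : Preserves σ S
  · have hmem (y : X) (hy : y ∈ cycleSet σ x) : x ∈ S ↔ y ∈ S :=
      hS.mem_iff_of_sameCycle (mem_cycleSet.1 hy)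
    by_cases hx : x ∈ S
    · have hsub : cycleSet σ x ⊆ S := fun y hy ↦ (hmem y hy).1 hx
      have h := neg_one_pow_mul_signOn_union_cycleSet (sdiff_disjoint (s := cycleSet σ x) (t := S))
      rw [sdiff_union_of_subset hsub] at h
      rw [symmDiff_of_ge hsub, h, neg_neg]
    · have hdisj : _root_.Disjoint S (cycleSet σ x) :=
        disjoint_right.2 fun y hy ↦ (hmem y hy).not.1 hx
      rw [hdisj.symmDiff_eq_sup, sup_eq_union, neg_one_pow_mul_signOn_union_cycleSet hdisj]
  · have hSC : ¬ Preserves σ (S ∆ cycleSet σ x) := fun h ↦ hS fun y ↦ by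
      have hy := h y
      rw [mem_symmDiff, mem_symmDiff, preserves_cycleSet y] at hy
      tauto
    rw [signOn_of_not_preserves hS, signOn_of_not_preserves hSC, mul_zero, mul_zero, neg_zero]

/-- Adding or removing the cycle through `x` pairs off the terms. The sum is the diagonal
cofactor at `z` of `1 - P_σ`, where `P_σ` is the permutation matrix of `σ`. -/
lemma sum_signOn_eq_zero_of_not_sameCycle (h : ¬ σ.SameCycle z x) :
    ∑ S : Finset X with z ∉ S, (-1) ^ #S * signOn σ S = 0 := by
  refine sum_involution (fun S _ ↦ S ∆ cycleSet σ x) (fun S _ ↦ ?_) (fun S _ _ ↦ ?_)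
    (fun S hS ↦ ?_) fun S _ ↦ symmDiff_symmDiff_cancel_right _ S
  · rw [neg_one_pow_mul_signOn_symmDiff_cycleSet, add_neg_cancel]
  · rw [ne_eq, symmDiff_eq_left]
    exact ne_empty_of_mem (mem_cycleSet.2 (SameCycle.refl σ x))
  · have hz : z ∉ cycleSet σ x := fun hz ↦ h (mem_cycleSet.1 hz).symm
    rw [mem_filter_univ] at hS ⊢
    simp only [mem_symmDiff, hS, hz, false_and, or_self, not_false_eq_true]

lemma sum_signOn_eq_one_of_forall_sameCycle (h : ∀ x, σ.SameCycle z x) :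
    ∑ S : Finset X with z ∉ S, (-1) ^ #S * signOn σ S = 1 := by
  rw [sum_eq_single ∅]
  · rw [card_empty, pow_zero, one_mul, signOn_empty]
  · intro S hzS hS
    obtain ⟨y, hy⟩ := nonempty_iff_ne_empty.2 hS
    rw [signOn_of_not_preserves, mul_zero]
    exact fun hpres ↦ (mem_filter_univ S).1 hzS ((hpres.mem_iff_of_sameCycle (h y)).2 hy)
  · simp

lemma sum_card_sub_mul_signOn (σ : Perm X) :
    ∑ S : Finset X, ((Fintype.card X : ℤ) - #S) * ((-1) ^ #S * signOn σ S) =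
      if ∀ a b, σ.SameCycle a b then (Fintype.card X : ℤ) else 0 := by
  have hdouble : ∑ S : Finset X, ((Fintype.card X : ℤ) - #S) * ((-1) ^ #S * signOn σ S) =
      ∑ z : X, ∑ S : Finset X with z ∉ S, (-1) ^ #S * signOn σ S := by
    simp_rw [sum_filter]
    rw [sum_comm]
    refine sum_congr rfl fun S _ ↦ ?_
    rw [← sum_filter, sum_const, nsmul_eq_mul, ← compl_filter, filter_univ_mem, card_compl,
      Nat.cast_sub (card_le_univ S)]
  rw [hdouble]
  split_ifs with h
  · rw [sum_congr rfl fun z _ ↦ sum_signOn_eq_one_of_forall_sameCycle (h z), sum_const, card_univ,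
      nsmul_one]
  · push Not at h
    obtain ⟨a, b, hab⟩ := h
    refine sum_eq_zero fun z _ ↦ ?_
    by_cases hz : σ.SameCycle z a
    · exact sum_signOn_eq_zero_of_not_sameCycle fun hzb ↦ hab (hz.symm.trans hzb)
    · exact sum_signOn_eq_zero_of_not_sameCycle hz

end SignOn

section Matching

variable {X : Type*} {ω : Perm X} {U : Finset X}

/-- Perfect matchings are encoded, as in `Omega`, by fixed-point-free involutions. -/
abbrev IsPerfectMatching (ω : Perm X) : Prop := ∀ a, ω (ω a) = a ∧ ω a ≠ a

lemma IsPerfectMatching.sq_eq_one (hω : IsPerfectMatching ω) : ω ^ 2 = 1 :=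
  Equiv.ext fun x ↦ (hω x).1

lemma IsPerfectMatching.conj (hω : IsPerfectMatching ω) (τ : Perm X) :
    IsPerfectMatching (τ * ω * τ⁻¹) := fun x ↦
  ⟨by simp [(hω _).1], fun h ↦ (hω (τ⁻¹ x)).2 (τ.injective (by simpa using h))⟩

lemma IsPerfectMatching.subtypePerm {p : X → Prop} (hω : IsPerfectMatching ω)
    (hp : ∀ x, p (ω x) ↔ p x) : IsPerfectMatching (ω.subtypePerm hp) := fun x ↦
  ⟨Subtype.ext (hω x).1, fun hx ↦ (hω x).2 (congrArg Subtype.val hx)⟩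

lemma IsPerfectMatching.subtypeCongr {p : X → Prop} [DecidablePred p] {f : Perm {x // p x}}
    {g : Perm {x // ¬ p x}} (hf : IsPerfectMatching f) (hg : IsPerfectMatching g) :
    IsPerfectMatching (f.subtypeCongr g) := fun x ↦ by
  by_cases hx : p x
  · rw [Perm.subtypeCongr.left_apply f g hx, Perm.subtypeCongr.left_apply_subtype, (hf _).1]
    exact ⟨rfl, fun h ↦ (hf ⟨x, hx⟩).2 (Subtype.ext h)⟩
  · rw [Perm.subtypeCongr.right_apply f g hx, Perm.subtypeCongr.right_apply_subtype, (hg _).1]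
    exact ⟨rfl, fun h ↦ (hg ⟨x, hx⟩).2 (Subtype.ext h)⟩

variable [Fintype X] [DecidableEq X]

lemma IsPerfectMatching.support_eq (hω : IsPerfectMatching ω) : ω.support = univ :=
  eq_univ_of_forall fun x ↦ mem_support.2 (hω x).2

lemma isPerfectMatching_iff_cycleType :
    IsPerfectMatching ω ↔
      ω.cycleType = Multiset.replicate ω.cycleType.card 2 ∧
        ω.cycleType.card * 2 = Fintype.card X := by
  rw [Multiset.eq_replicate, and_iff_right rfl, ← pow_prime_eq_one_iff]
  have hsum (h : ω ^ 2 = 1) : ω.cycleType.card * 2 = #ω.support := by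
    rw [← sum_cycleType, cycleType_of_pow_prime_eq_one h, Multiset.sum_replicate,
      Multiset.card_replicate, smul_eq_mul]
  refine ⟨fun hω ↦ ⟨hω.sq_eq_one, ?_⟩, fun ⟨hsq, hcard⟩ x ↦ ⟨DFunLike.congr_fun hsq x, ?_⟩⟩
  · rw [hsum hω.sq_eq_one, hω.support_eq, card_univ]
  · rw [← mem_support, (card_eq_iff_eq_univ _).1 ((hsum hsq).symm.trans hcard)]
    exact mem_univ x

/-- The number of perfect matchings of a set of `k` elements. -/
def matchingCount (k : ℕ) : ℕ := if Even k then (k - 1)‼ else 0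

lemma factorial_two_mul (k : ℕ) : (2 * k)! = (2 * k - 1)‼ * (2 ^ k * k !) := by
  rcases k with _ | k
  · rfl
  · rw [← Nat.doubleFactorial_two_mul, show 2 * (k + 1) = 2 * k + 1 + 1 by ring,
      Nat.factorial_eq_mul_doubleFactorial, Nat.add_sub_cancel, mul_comm]

lemma card_filter_isPerfectMatching :
    #{ω : Perm X | IsPerfectMatching ω} = matchingCount (Fintype.card X) := by
  rw [matchingCount]
  split_ifs with heven
  · obtain ⟨k, hk⟩ := even_iff_exists_two_mul.1 heven
    have hcycle (ω : Perm X) :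
        IsPerfectMatching ω ↔ ω.cycleType = Multiset.replicate k 2 := by
      rw [isPerfectMatching_iff_cycleType]
      refine ⟨fun ⟨h, hcard⟩ ↦ ?_, fun h ↦ ?_⟩
      · rwa [show ω.cycleType.card = k by omega] at h
      · rw [h, Multiset.card_replicate, hk, mul_comm]
        exact ⟨rfl, rfl⟩
    have hparts : ∏ n ∈ (Multiset.replicate k 2).toFinset, ((Multiset.replicate k 2).count n)! =
        k ! := by
      rcases k.eq_zero_or_pos with rfl | hk0
      · simp
      · rw [Multiset.toFinset_replicate, if_neg hk0.ne', prod_singleton,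
          Multiset.count_replicate_self]
    have hcond : (Multiset.replicate k 2).sum ≤ Fintype.card X ∧
        ∀ a ∈ Multiset.replicate k 2, 2 ≤ a := by
      rw [Multiset.sum_replicate, hk, smul_eq_mul, mul_comm]
      exact ⟨le_rfl, fun a ha ↦ (Multiset.eq_of_mem_replicate ha).ge⟩
    rw [filter_congr fun ω _ ↦ hcycle ω, card_of_cycleType, if_pos hcond, hparts,
      Multiset.sum_replicate, Multiset.prod_replicate, hk, smul_eq_mul, mul_comm k 2, Nat.sub_self,
      Nat.factorial_zero, one_mul, factorial_two_mul,
      Nat.mul_div_cancel _ (by positivity)]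
  · refine card_eq_zero.2 (filter_eq_empty_iff.2 fun ω _ hω ↦ heven ?_)
    exact even_iff_exists_two_mul.2 ⟨_, by
      rw [← (isPerfectMatching_iff_cycleType.1 hω).2, mul_comm]⟩

lemma IsPerfectMatching.sign_eq (hω : IsPerfectMatching ω) :
    sign ω = (-1) ^ (Fintype.card X / 2) := by
  have : IsEmpty (Function.fixedPoints ω) := ⟨fun x ↦ (hω x).2 x.2⟩
  rw [sign_of_pow_two_eq_one hω.sq_eq_one,
    Fintype.card_eq_zero (α := Function.fixedPoints ω), Nat.sub_zero]

lemma IsPerfectMatching.signOn_eq (hω : IsPerfectMatching ω) :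
    signOn ω U = if Preserves ω U then (-1) ^ (#U / 2) else 0 := by
  split_ifs with h
  · rw [signOn_of_preserves h, (hω.subtypePerm h).sign_eq, Fintype.card_coe,
      Units.val_pow_eq_pow_val, Units.val_neg, Units.val_one]
  · exact signOn_of_not_preserves h

lemma card_filter_isPerfectMatching_and_preserves (U : Finset X) :
    #{ω : Perm X | IsPerfectMatching ω ∧ Preserves ω U} =
      matchingCount #U * matchingCount (Fintype.card X - #U) := by
  have hU : Fintype.card {x // x ∈ U} = #U := Fintype.card_coe U
  have hUc : Fintype.card {x // x ∉ U} = Fintype.card X - #U := by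
    rw [Fintype.card_subtype_compl, hU]
  rw [← hUc, ← hU, ← card_filter_isPerfectMatching, ← card_filter_isPerfectMatching,
    ← card_product]
  refine card_bij' (fun ω hω ↦
      (ω.subtypePerm ((mem_filter_univ ω).1 hω).2,
        ω.subtypePerm (p := (· ∉ U)) fun x ↦ (((mem_filter_univ ω).1 hω).2 x).not))
    (fun fg _ ↦ Perm.subtypeCongr fg.1 fg.2) (fun ω hω ↦ ?_) (fun fg hfg ↦ ?_)
    (fun ω hω ↦ ?_) fun fg _ ↦ ?_
  · obtain ⟨hM, hU⟩ := (mem_filter_univ ω).1 hω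
    exact mem_product.2 ⟨(mem_filter_univ _).2 (hM.subtypePerm hU),
      (mem_filter_univ _).2 (hM.subtypePerm fun x ↦ (hU x).not)⟩
  · obtain ⟨hf, hg⟩ := mem_product.1 hfg
    refine (mem_filter_univ _).2 ⟨((mem_filter_univ _).1 hf).subtypeCongr
      ((mem_filter_univ _).1 hg), preserves_of_forall_apply_mem fun x hx ↦ ?_⟩
    rw [Perm.subtypeCongr.left_apply _ _ hx]
    exact (fg.1 ⟨x, hx⟩).2
  · ext x
    by_cases hx : x ∈ U
    · exact Perm.subtypeCongr.left_apply _ _ hx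
    · exact Perm.subtypeCongr.right_apply _ _ hx
  · ext x
    · exact Perm.subtypeCongr.left_apply _ _ x.2
    · exact Perm.subtypeCongr.right_apply _ _ x.2

lemma sum_signOn_isPerfectMatching (U : Finset X) :
    ∑ ω : Perm X with IsPerfectMatching ω, signOn ω U =
      (-1) ^ (#U / 2) * (matchingCount #U * matchingCount (Fintype.card X - #U)) := by
  rw [sum_congr rfl fun ω hω ↦ ((mem_filter_univ ω).1 hω).signOn_eq, ← sum_filter, filter_filter,
    sum_const, card_filter_isPerfectMatching_and_preserves, nsmul_eq_mul, mul_comm, Nat.cast_mul]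

lemma sum_isPerfectMatching_conj {M : Type*} [AddCommMonoid M] (τ : Perm X) (f : Perm X → M) :
    ∑ ω : Perm X with IsPerfectMatching ω, f (τ * ω * τ⁻¹) =
      ∑ ω : Perm X with IsPerfectMatching ω, f ω := by
  refine sum_equiv (MulAut.conj τ).toEquiv (fun ω ↦ ?_) fun _ _ ↦ rfl
  rw [mem_filter_univ, mem_filter_univ]
  exact ⟨fun h ↦ h.conj τ, fun h ↦ by simpa [mul_assoc] using h.conj τ⁻¹⟩

end Matching

section SignSum

variable {X : Type*} [Fintype X] [DecidableEq X] {ω ρ : Perm X} {S U : Finset X} {a b : X}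

lemma signOn_swap_mul_mul_swap (ha : a ∉ U) (hb : b ∉ U) :
    signOn (swap a b * ω * swap a b) U = signOn ω U := by
  have hfix (x : X) (hx : x ∈ U) : swap a b x = x :=
    swap_apply_of_ne_of_ne (ne_of_mem_of_not_mem hx ha) (ne_of_mem_of_not_mem hx hb)
  have hpres : Preserves (swap a b) U := preserves_of_forall_apply_mem fun x hx ↦ by rwa [hfix x hx]
  have hone : signOn (swap a b) U = 1 := (signOn_congr hfix).trans signOn_one
  rw [signOn_mul_of_preserves_right hpres, signOn_mul hpres, hone, one_mul, mul_one]

lemma sum_signOn_isPerfectMatching_apply_eq (ha : a ∉ U) (hb : b ∉ U) (hab : a ≠ b) :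
    ((Fintype.card X : ℤ) - #U - 1) *
        ∑ ω : Perm X with IsPerfectMatching ω ∧ ω b = a, signOn ω U =
      ∑ ω : Perm X with IsPerfectMatching ω, signOn ω U := by
  have hindep (c : X) (hc : c ∉ insert b U) :
      ∑ ω : Perm X with IsPerfectMatching ω ∧ ω b = c, signOn ω U =
        ∑ ω : Perm X with IsPerfectMatching ω ∧ ω b = a, signOn ω U := by
    rw [mem_insert, not_or] at hc
    simp_rw [← filter_filter, sum_filter fun ω : Perm X ↦ ω b = _]
    rw [← sum_isPerfectMatching_conj (swap a c)]
    refine sum_congr rfl fun ω _ ↦ ?_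
    have hb_image : (swap a c * ω * swap a c) b = c ↔ ω b = a := by
      rw [Perm.mul_apply, Perm.mul_apply, swap_apply_of_ne_of_ne hab.symm (Ne.symm hc.1),
        ← Equiv.eq_symm_apply, symm_swap, swap_apply_right]
    simp only [swap_inv, signOn_swap_mul_mul_swap ha hc.2, hb_image]
  have hzero (c : X) (hc : c ∈ insert b U) :
      ∑ ω : Perm X with IsPerfectMatching ω ∧ ω b = c, signOn ω U = 0 := by
    refine sum_eq_zero fun ω hω ↦ ?_
    obtain ⟨hM, rfl⟩ := (mem_filter_univ ω).1 hω
    refine signOn_of_not_preserves fun hU ↦ hb ((hU b).1 ?_)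
    exact (mem_insert.1 hc).resolve_left (hM b).2
  calc
    _ = ∑ _c ∈ (insert b U)ᶜ, ∑ ω : Perm X with IsPerfectMatching ω ∧ ω b = a, signOn ω U := by
      rw [sum_const, nsmul_eq_mul, card_compl, Nat.cast_sub (card_le_univ _),
        card_insert_of_notMem hb, Nat.cast_succ, sub_sub]
    _ = ∑ c, ∑ ω : Perm X with IsPerfectMatching ω ∧ ω b = c, signOn ω U := by
      rw [← sum_compl_add_sum (insert b U), sum_eq_zero hzero, add_zero]
      exact (sum_congr rfl fun c hc ↦ hindep c (mem_compl.1 hc)).symm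
    _ = _ := by
      simp_rw [← filter_filter]
      exact sum_fiberwise _ _ _

/-- The total of the signs of the permutations `ω ∘ ρ` on `S`, over all perfect matchings `ω`. -/
def signSum (ρ : Perm X) (S : Finset X) : ℤ :=
  ∑ ω : Perm X with IsPerfectMatching ω, signOn (ω * ρ) S

lemma signSum_eq_zero (hab : a ≠ b) (ha : a ∈ S) (hb : b ∈ S) (ha' : ρ.symm a ∉ S)
    (hb' : ρ.symm b ∉ S) : signSum ρ S = 0 := by
  have hflip (ω : Perm X) : signOn (swap a b * ω * (swap a b)⁻¹ * ρ) S = -signOn (ω * ρ) S := by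
    rw [swap_inv, ← neg_one_mul, ← signOn_swap hab ha hb, ← signOn_mul (preserves_swap ha hb)]
    refine signOn_congr fun x hx ↦ ?_
    have hxa : ρ x ≠ a := fun h ↦ ha' (by rwa [← h, symm_apply_apply])
    have hxb : ρ x ≠ b := fun h ↦ hb' (by rwa [← h, symm_apply_apply])
    simp only [Perm.mul_apply, swap_apply_of_ne_of_ne hxa hxb]
  have hneg : signSum ρ S = -signSum ρ S := by
    rw [signSum, ← sum_neg_distrib]
    nth_rw 1 [← sum_isPerfectMatching_conj (swap a b)]
    exact sum_congr rfl fun ω _ ↦ hflip ω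
  omega

lemma signSum_of_preserves (hρ : Preserves ρ S) :
    signSum ρ S = signOn ρ S * ∑ ω : Perm X with IsPerfectMatching ω, signOn ω S := by
  rw [signSum, mul_comm, sum_mul]
  exact sum_congr rfl fun ω _ ↦ signOn_mul_of_preserves_right hρ

lemma signOn_mul_insert_of_apply_eq (ha : a ∉ U) (hb : b ∉ U)
    (hρ : ∀ x, ρ x ∈ insert b U ↔ x ∈ insert a U) (hω : ω b = a) :
    signOn (ω * ρ) (insert a U) = signOn (swap a b * ρ) (insert a U) * signOn ω U := by
  have hfix (x : X) (hx : x ∈ U) : swap a b x = x :=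
    swap_apply_of_ne_of_ne (ne_of_mem_of_not_mem hx ha) (ne_of_mem_of_not_mem hx hb)
  have hpres : Preserves (swap a b * ρ) (insert a U) := preserves_of_forall_apply_mem fun x hx ↦ by
    rcases mem_insert.1 ((hρ x).2 hx) with h | h
    · rw [Perm.mul_apply, h, swap_apply_right]
      exact mem_insert_self a U
    · rw [Perm.mul_apply, hfix _ h]
      exact mem_insert_of_mem h
  have ha_fix : (ω * swap a b) a = a := by rw [Perm.mul_apply, swap_apply_left, hω]
  have hfactor : ω * ρ = ω * swap a b * (swap a b * ρ) := by
    rw [mul_assoc, swap_mul_self_mul]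
  rw [hfactor, signOn_mul_of_preserves_right hpres, signOn_insert_of_apply_eq ha_fix ha, mul_comm,
    signOn_congr (σ := ω * swap a b) (τ := ω) fun x hx ↦ congrArg ω (hfix x hx)]

lemma signOn_mul_insert_of_apply_ne (hb : b ∉ U) (hab : a ≠ b)
    (hρ : ∀ x, ρ x ∈ insert b U ↔ x ∈ insert a U) (hω : IsPerfectMatching ω) (hne : ω b ≠ a) :
    signOn (ω * ρ) (insert a U) = 0 := by
  refine signOn_of_not_preserves fun hpres ↦ ?_
  have hmaps (y : X) (hy : y ∈ insert b U) : ω y ∈ insert a U := by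
    have h := (hpres (ρ.symm y)).2 ((hρ _).1 (by rwa [apply_symm_apply]))
    rwa [Perm.mul_apply, apply_symm_apply] at h
  have hbU : ω b ∈ U := (mem_insert.1 (hmaps b (mem_insert_self b U))).resolve_left hne
  have hb' := hmaps _ (mem_insert_of_mem hbU)
  rw [(hω b).1] at hb'
  exact hb ((mem_insert.1 hb').resolve_left hab.symm)

lemma signSum_insert (ha : a ∉ U) (hb : b ∉ U) (hab : a ≠ b)
    (hρ : ∀ x, ρ x ∈ insert b U ↔ x ∈ insert a U) :
    ((Fintype.card X : ℤ) - #U - 1) * signSum ρ (insert a U) =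
      signOn (swap a b * ρ) (insert a U) *
        ∑ ω : Perm X with IsPerfectMatching ω, signOn ω U := by
  have hsum : signSum ρ (insert a U) = signOn (swap a b * ρ) (insert a U) *
      ∑ ω : Perm X with IsPerfectMatching ω ∧ ω b = a, signOn ω U := by
    rw [signSum, mul_sum, ← filter_filter, sum_filter fun ω : Perm X ↦ ω b = a]
    refine sum_congr rfl fun ω hω ↦ ?_
    split_ifs with h
    · exact signOn_mul_insert_of_apply_eq ha hb hρ h
    · exact signOn_mul_insert_of_apply_ne hb hab hρ ((mem_filter_univ ω).1 hω) h
  rw [hsum, mul_left_comm, sum_signOn_isPerfectMatching_apply_eq ha hb hab]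

end SignSum

section Entries

variable {X : Type*} {ρ : Perm X} {S F : Finset X} {a : X}

/-- All cycles of `ρ` have length three: `ρ` rotates the corners of disjoint triangles. -/
structure IsTriangleRotation (ρ : Perm X) : Prop where
  apply_apply_apply : ∀ x, ρ (ρ (ρ x)) = x
  apply_ne : ∀ x, ρ x ≠ x

namespace IsTriangleRotation

lemma symm_apply (hρ : IsTriangleRotation ρ) (x : X) : ρ.symm x = ρ (ρ x) := by
  rw [symm_apply_eq, hρ.apply_apply_apply]

lemma apply_apply_ne (hρ : IsTriangleRotation ρ) (x : X) : ρ (ρ x) ≠ x := fun h ↦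
  hρ.apply_ne x ((hρ.apply_apply_apply x).symm.trans (congrArg ρ h)).symm

end IsTriangleRotation

variable [DecidableEq X]

/-- The points at which `ρ` enters `S`. -/
def entries (ρ : Perm X) (S : Finset X) : Finset X := {x ∈ S | ρ.symm x ∉ S}

lemma mem_entries : a ∈ entries ρ S ↔ a ∈ S ∧ ρ.symm a ∉ S := mem_filter

lemma entries_eq_empty_iff : entries ρ S = ∅ ↔ Preserves ρ S := by
  refine ⟨fun h ↦ ?_, fun h ↦ eq_empty_of_forall_notMem fun x hx ↦ ?_⟩
  · have hsymm : Preserves ρ⁻¹ S := preserves_of_forall_apply_mem fun x hx ↦ by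
      by_contra hx'
      exact notMem_empty x (h ▸ mem_entries.2 ⟨hx, hx'⟩)
    exact fun x ↦ by simpa using (hsymm (ρ x)).symm
  · obtain ⟨hxS, hx'⟩ := mem_entries.1 hx
    exact hx' ((h _).1 (by rwa [apply_symm_apply]))

lemma IsTriangleRotation.notMem_insert_apply (hρ : IsTriangleRotation ρ) (ha : a ∉ F) :
    a ∉ insert (ρ a) F := by
  rw [mem_insert, not_or]
  exact ⟨(hρ.apply_ne a).symm, ha⟩

lemma IsTriangleRotation.entries_eq_singleton_iff (hρ : IsTriangleRotation ρ) :
    entries ρ S = {a} ↔ a ∈ S ∧ ρ (ρ a) ∉ S ∧ Preserves ρ (S \ {a, ρ a}) := by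
  have h3 := hρ.apply_apply_apply
  constructor
  · intro h
    have hmem (x : X) : x ∈ S ∧ ρ (ρ x) ∉ S ↔ x = a := by
      rw [← hρ.symm_apply, ← mem_entries, h, mem_singleton]
    obtain ⟨haS, ha'⟩ := (hmem a).2 rfl
    refine ⟨haS, ha', preserves_of_forall_apply_mem fun x hx ↦ ?_⟩
    have := hmem x
    have := hmem (ρ (ρ x))
    grind
  · rintro ⟨haS, ha', hF⟩
    ext x
    rw [mem_entries, mem_singleton, hρ.symm_apply]
    have := hF x
    have := hF (ρ x)
    grind

variable [Fintype X]

lemma signSum_eq_zero_of_one_lt_card_entries (h : 1 < #(entries ρ S)) : signSum ρ S = 0 := by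
  obtain ⟨a, ha, b, hb, hab⟩ := one_lt_card.1 h
  obtain ⟨⟨ha, ha'⟩, hb, hb'⟩ := And.intro (mem_entries.1 ha) (mem_entries.1 hb)
  exact signSum_eq_zero hab ha hb ha' hb'

lemma sum_eq_sum_entries {M : Type*} [AddCommMonoid M] {f : Finset X → M}
    (hf : ∀ S, 1 < #(entries ρ S) → f S = 0) :
    ∑ S, f S = ∑ S with Preserves ρ S, f S + ∑ a, ∑ S with entries ρ S = {a}, f S := by
  simp_rw [← entries_eq_empty_iff, sum_filter]
  rw [sum_comm, ← sum_add_distrib]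
  refine sum_congr rfl fun S _ ↦ ?_
  rcases (entries ρ S).eq_empty_or_nonempty with h | ⟨b, hb⟩
  · simp [h, eq_comm (a := (∅ : Finset X))]
  · by_cases hlt : 1 < #(entries ρ S)
    · simp [hf S hlt]
    · have h : entries ρ S = {b} := (eq_singleton_iff_unique_mem).2
        ⟨hb, fun c hc ↦ card_le_one.1 (not_lt.1 hlt) c hc b hb⟩
      simp [h]

namespace IsTriangleRotation

lemma signOn_eq_one (hρ : IsTriangleRotation ρ) (hF : Preserves ρ F) : signOn ρ F = 1 := by
  have hcube : ρ.subtypePerm hF ^ 3 = 1 := by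
    ext x
    exact hρ.apply_apply_apply x
  have hsign : Perm.sign (ρ.subtypePerm hF) ^ 3 = 1 := by rw [← map_pow, hcube, Perm.sign_one]
  rw [Int.units_pow_eq_pow_mod_two, pow_one] at hsign
  rw [signOn_of_preserves hF, hsign, Units.val_one]

lemma filter_entries_and_sdiff_eq (hρ : IsTriangleRotation ρ) (hF : Preserves ρ F) (ha : a ∉ F) :
    ({S | entries ρ S = {a} ∧ S \ {a, ρ a} = F} : Finset (Finset X)) =
      {insert a F, insert a (insert (ρ a) F)} := by
  have ha' : ρ a ∉ F := (hF a).not.2 ha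
  have ha'' : ρ (ρ a) ∉ F := (hF (ρ a)).not.2 ha'
  have hne' := hρ.apply_apply_ne a
  have hne'' := hρ.apply_ne (ρ a)
  ext S
  rw [mem_filter_univ, hρ.entries_eq_singleton_iff, mem_insert, mem_singleton]
  constructor
  · rintro ⟨⟨haS, -, -⟩, rfl⟩
    by_cases hS : ρ a ∈ S
    · right
      grind
    · left
      grind
  · rintro (rfl | rfl)
    · have hsdiff : insert a F \ {a, ρ a} = F := by grind
      grind
    · have hsdiff : insert a (insert (ρ a) F) \ {a, ρ a} = F := by grind
      grind

lemma sum_entries_eq_singleton {M : Type*} [AddCommMonoid M] (hρ : IsTriangleRotation ρ)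
    (f : Finset X → M) (a : X) :
    ∑ S with entries ρ S = {a}, f S =
      ∑ F with Preserves ρ F ∧ a ∉ F, (f (insert a F) + f (insert a (insert (ρ a) F))) := by
  have hmaps (S : Finset X) (hS : S ∈ ({S | entries ρ S = {a}} : Finset (Finset X))) :
      S \ {a, ρ a} ∈ ({F | Preserves ρ F ∧ a ∉ F} : Finset (Finset X)) := by
    rw [mem_filter_univ, hρ.entries_eq_singleton_iff] at hS
    exact (mem_filter_univ _).2 ⟨hS.2.2, by simp⟩
  rw [← sum_fiberwise_of_maps_to hmaps]
  refine sum_congr rfl fun F hF ↦ ?_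
  obtain ⟨hF, ha⟩ := (mem_filter_univ F).1 hF
  rw [filter_filter, hρ.filter_entries_and_sdiff_eq hF ha, sum_pair]
  have hne := hρ.apply_ne a
  have ha' : ρ a ∉ F := (hF a).not.2 ha
  exact ne_of_mem_of_not_mem' (mem_insert_of_mem (mem_insert_self _ _)) (by grind) |>.symm

lemma sum_eq_sum_preserves {M : Type*} [AddCommMonoid M] (hρ : IsTriangleRotation ρ)
    {f : Finset X → M} (hf : ∀ S, 1 < #(entries ρ S) → f S = 0) :
    ∑ S, f S = ∑ F with Preserves ρ F,
      (f F + ∑ a ∈ Fᶜ, (f (insert a F) + f (insert a (insert (ρ a) F)))) := by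
  rw [sum_eq_sum_entries hf, sum_congr rfl fun a _ ↦ hρ.sum_entries_eq_singleton f a,
    sum_add_distrib]
  congr 1
  refine sum_comm' fun a F ↦ ?_
  simp [and_comm]

end IsTriangleRotation

end Entries

section OneCycle

variable {X : Type*} [Fintype X] [DecidableEq X] {ρ : Perm X} {F : Finset X} {a : X}

/-- The contribution of `S` when the identity `sum_card_sub_mul_signOn`, which detects whether
`ω ∘ ρ` has a single cycle, is summed over all perfect matchings `ω`. -/
def weightedSignSum (ρ : Perm X) (S : Finset X) : ℤ :=
  ((Fintype.card X : ℤ) - #S) * ((-1) ^ #S * signSum ρ S)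

namespace IsTriangleRotation

lemma card_sub_mul_signSum_insert (hρ : IsTriangleRotation ρ) (hF : Preserves ρ F) (ha : a ∉ F) :
    ((Fintype.card X : ℤ) - #F - 1) * signSum ρ (insert a F) =
      ∑ ω : Perm X with IsPerfectMatching ω, signOn ω F := by
  have hρa : ρ a ∉ F := (hF a).not.2 ha
  have himage (x : X) : ρ x ∈ insert (ρ a) F ↔ x ∈ insert a F := by
    simp only [mem_insert, ρ.injective.eq_iff, hF x]
  have hfix : (swap a (ρ a) * ρ) a = a := by rw [Perm.mul_apply, swap_apply_right]
  have hcongr (x : X) (hx : x ∈ F) : (swap a (ρ a) * ρ) x = ρ x :=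
    have hρx := (hF x).2 hx
    swap_apply_of_ne_of_ne (ne_of_mem_of_not_mem hρx ha) (ne_of_mem_of_not_mem hρx hρa)
  rw [signSum_insert ha hρa (hρ.apply_ne a).symm himage, signOn_insert_of_apply_eq hfix ha,
    signOn_congr hcongr, hρ.signOn_eq_one hF, one_mul]

lemma signOn_swap_mul_insert_insert (hρ : IsTriangleRotation ρ) (hF : Preserves ρ F)
    (ha : a ∉ F) :
    signOn (swap a (ρ (ρ a)) * ρ) (insert a (insert (ρ a) F)) = -1 := by
  have hρa : ρ a ∉ F := (hF a).not.2 ha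
  have hρρa : ρ (ρ a) ∉ F := (hF (ρ a)).not.2 hρa
  have hne : a ≠ ρ a := (hρ.apply_ne a).symm
  have hne' : ρ a ≠ ρ (ρ a) := (hρ.apply_ne (ρ a)).symm
  set σ := swap a (ρ a) * (swap a (ρ (ρ a)) * ρ) with hσ
  have hσa : σ a = a := by
    simp only [hσ, Perm.mul_apply, swap_apply_of_ne_of_ne hne.symm hne', swap_apply_right]
  have hσρa : σ (ρ a) = ρ a := by
    simp only [hσ, Perm.mul_apply, swap_apply_right, swap_apply_left]
  have hσF (x : X) (hx : x ∈ F) : σ x = ρ x := by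
    have hρx := (hF x).2 hx
    have hxa := ne_of_mem_of_not_mem hρx ha
    simp only [hσ, Perm.mul_apply, swap_apply_of_ne_of_ne hxa (ne_of_mem_of_not_mem hρx hρρa),
      swap_apply_of_ne_of_ne hxa (ne_of_mem_of_not_mem hρx hρa)]
  have ha_mem : a ∈ insert a (insert (ρ a) F) := mem_insert_self _ _
  have hρa_mem : ρ a ∈ insert a (insert (ρ a) F) := mem_insert_of_mem (mem_insert_self _ _)
  have ha' : a ∉ insert (ρ a) F := hρ.notMem_insert_apply ha
  rw [← swap_mul_self_mul a (ρ a) (swap a (ρ (ρ a)) * ρ), ← hσ,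
    signOn_mul (preserves_swap ha_mem hρa_mem), signOn_swap hne ha_mem hρa_mem,
    signOn_insert_of_apply_eq hσa ha', signOn_insert_of_apply_eq hσρa hρa, signOn_congr hσF,
    hρ.signOn_eq_one hF, mul_one]

lemma card_sub_mul_signSum_insert_insert (hρ : IsTriangleRotation ρ) (hF : Preserves ρ F)
    (ha : a ∉ F) :
    ((Fintype.card X : ℤ) - #(insert (ρ a) F) - 1) * signSum ρ (insert a (insert (ρ a) F)) =
      -∑ ω : Perm X with IsPerfectMatching ω, signOn ω (insert (ρ a) F) := by
  have hρa : ρ a ∉ F := (hF a).not.2 ha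
  have hρρa : ρ (ρ a) ∉ F := (hF (ρ a)).not.2 hρa
  have ha' : a ∉ insert (ρ a) F := hρ.notMem_insert_apply ha
  have hb : ρ (ρ a) ∉ insert (ρ a) F := by
    rw [mem_insert, not_or]
    exact ⟨hρ.apply_ne (ρ a), hρρa⟩
  have himage (x : X) :
      ρ x ∈ insert (ρ (ρ a)) (insert (ρ a) F) ↔ x ∈ insert a (insert (ρ a) F) := by
    simp only [mem_insert, ρ.injective.eq_iff, hF x]
    tauto
  rw [signSum_insert ha' hb (hρ.apply_apply_ne a).symm himage,
    hρ.signOn_swap_mul_insert_insert hF ha, neg_one_mul]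

lemma weightedSignSum_add_sum_compl (hρ : IsTriangleRotation ρ) (hF : Preserves ρ F) :
    weightedSignSum ρ F +
        ∑ a ∈ Fᶜ, (weightedSignSum ρ (insert a F) +
          weightedSignSum ρ (insert a (insert (ρ a) F))) =
      ((Fintype.card X : ℤ) - #F) * ((-1) ^ (#F + 1) * ((-1) ^ ((#F + 1) / 2) *
        (matchingCount (#F + 1) * matchingCount (Fintype.card X - (#F + 1))))) := by
  set D : ℤ := ∑ ω : Perm X with IsPerfectMatching ω, signOn ω F
  set E : ℤ := (-1) ^ ((#F + 1) / 2) *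
    (matchingCount (#F + 1) * matchingCount (Fintype.card X - (#F + 1))) with hE
  have hF_self : weightedSignSum ρ F = ((Fintype.card X : ℤ) - #F) * ((-1) ^ #F * D) := by
    rw [weightedSignSum, signSum_of_preserves hF, hρ.signOn_eq_one hF, one_mul]
  have hterm (a : X) (ha : a ∈ Fᶜ) :
      weightedSignSum ρ (insert a F) + weightedSignSum ρ (insert a (insert (ρ a) F)) =
        (-1) ^ (#F + 1) * (D + E) := by
    have ha : a ∉ F := mem_compl.1 ha
    have hρa : ρ a ∉ F := (hF a).not.2 ha
    have ha' : a ∉ insert (ρ a) F := hρ.notMem_insert_apply ha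
    have hshort := hρ.card_sub_mul_signSum_insert hF ha
    have hlong := hρ.card_sub_mul_signSum_insert_insert hF ha
    rw [sum_signOn_isPerfectMatching, card_insert_of_notMem hρa, ← hE] at hlong
    rw [weightedSignSum, weightedSignSum, card_insert_of_notMem ha, card_insert_of_notMem ha',
      card_insert_of_notMem hρa]
    push_cast at hlong ⊢
    linear_combination (-1) ^ (#F + 1) * hshort + (-1) ^ (#F + 2) * hlong
  rw [sum_congr rfl hterm, sum_const, nsmul_eq_mul, hF_self, card_compl,
    Nat.cast_sub (card_le_univ F)]
  ring

lemma card_mul_card_filter_forall_sameCycle (hρ : IsTriangleRotation ρ) :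
    (Fintype.card X : ℤ) *
        #{ω : Perm X | IsPerfectMatching ω ∧ ∀ a b, (ω * ρ).SameCycle a b} =
      ∑ F : Finset X with Preserves ρ F, ((Fintype.card X : ℤ) - #F) *
        ((-1) ^ (#F + 1) * ((-1) ^ ((#F + 1) / 2) *
          (matchingCount (#F + 1) * matchingCount (Fintype.card X - (#F + 1))))) := by
  have hzero (S : Finset X) (hS : 1 < #(entries ρ S)) : weightedSignSum ρ S = 0 := by
    rw [weightedSignSum, signSum_eq_zero_of_one_lt_card_entries hS, mul_zero, mul_zero]
  calc
    _ = ∑ ω : Perm X with IsPerfectMatching ω,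
        if ∀ a b, (ω * ρ).SameCycle a b then (Fintype.card X : ℤ) else 0 := by
      rw [← filter_filter, ← sum_filter, sum_const, nsmul_eq_mul, mul_comm]
    _ = ∑ S, weightedSignSum ρ S := by
      simp_rw [← sum_card_sub_mul_signOn, weightedSignSum, signSum, mul_sum]
      exact sum_comm
    _ = _ := by
      rw [hρ.sum_eq_sum_preserves hzero]
      exact sum_congr rfl fun F hF ↦
        hρ.weightedSignSum_add_sum_compl ((mem_filter_univ F).1 hF)

end IsTriangleRotation

end OneCycle

section TriangleSets

variable {X : Type*} [Fintype X] {ρ : Perm X}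

namespace IsTriangleRotation

lemma card_cycleSet [DecidableEq X] (hρ : IsTriangleRotation ρ) (a : X) : #(cycleSet ρ a) = 3 := by
  have hpres : Preserves ρ {a, ρ a, ρ (ρ a)} := preserves_of_forall_apply_mem fun x hx ↦ by
    simp only [mem_insert, mem_singleton] at hx ⊢
    rcases hx with rfl | rfl | rfl
    · exact .inr (.inl rfl)
    · exact .inr (.inr rfl)
    · exact .inl (hρ.apply_apply_apply _)
  refine card_eq_three.2 ⟨a, ρ a, ρ (ρ a), (hρ.apply_ne a).symm, (hρ.apply_apply_ne a).symm,
    (hρ.apply_ne (ρ a)).symm, ?_⟩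
  ext x
  rw [mem_cycleSet]
  refine ⟨fun h ↦ (hpres.mem_iff_of_sameCycle h).1 (mem_insert_self _ _), fun hx ↦ ?_⟩
  simp only [mem_insert, mem_singleton] at hx
  rcases hx with rfl | rfl | rfl
  · exact .rfl
  · exact sameCycle_apply_right.2 .rfl
  · exact sameCycle_apply_right.2 (sameCycle_apply_right.2 .rfl)

lemma card_filter_mk_mem [DecidableEq (Quotient (SameCycle.setoid ρ))]
    (hρ : IsTriangleRotation ρ) (J : Finset (Quotient (SameCycle.setoid ρ))) :
    #{x : X | ⟦x⟧ ∈ J} = 3 * #J := by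
  classical
  have hmaps (x : X) (hx : x ∈ ({x : X | ⟦x⟧ ∈ J} : Finset X)) :
      (⟦x⟧ : Quotient (SameCycle.setoid ρ)) ∈ J := (mem_filter_univ x).1 hx
  rw [card_eq_sum_card_fiberwise hmaps, mul_comm]
  refine sum_const_nat fun q hq ↦ ?_
  obtain ⟨a, rfl⟩ := q.exists_rep
  rw [← hρ.card_cycleSet a]
  congr 1
  ext x
  rw [mem_cycleSet, mem_filter, mem_filter_univ, Quotient.eq]
  refine ⟨fun h ↦ h.2.symm, fun h ↦ ⟨?_, h.symm⟩⟩
  rwa [← Quotient.sound (s := SameCycle.setoid ρ) h]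

lemma sum_preserves_card [DecidableEq X] {M : Type*} [AddCommMonoid M]
    (hρ : IsTriangleRotation ρ) {m : ℕ} (hm : Fintype.card X = 3 * m) (g : ℕ → M) :
    ∑ F : Finset X with Preserves ρ F, g #F =
      ∑ j ∈ range (m + 1), m.choose j • g (3 * j) := by
  classical
  let mk : X → Quotient (SameCycle.setoid ρ) := Quotient.mk _
  have hcard : Fintype.card (Quotient (SameCycle.setoid ρ)) = m := by
    have := hρ.card_filter_mk_mem univ
    simp only [mem_univ, filter_true, card_univ, hm] at this
    omega
  have hmk (x : X) : mk (ρ x) = mk x := Quotient.sound (sameCycle_apply_left.2 .rfl)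
  have hpreimage (F : Finset X) (hF : Preserves ρ F) :
      ({x | mk x ∈ F.image mk} : Finset X) = F := by
    ext x
    rw [mem_filter_univ, mem_image]
    refine ⟨fun ⟨y, hy, hyx⟩ ↦ ?_, fun hx ↦ ⟨x, hx, rfl⟩⟩
    exact (hF.mem_iff_of_sameCycle (Quotient.exact hyx)).1 hy
  calc
    _ = ∑ J : Finset (Quotient (SameCycle.setoid ρ)), g (3 * #J) := by
      refine sum_nbij' (fun F ↦ F.image mk) (fun J ↦ ({x | mk x ∈ J} : Finset X))
        (fun F _ ↦ mem_univ _) (fun J _ ↦ (mem_filter_univ _).2 fun x ↦ ?_)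
        (fun F hF ↦ hpreimage F ((mem_filter_univ F).1 hF)) (fun J _ ↦ ?_) (fun F hF ↦ ?_)
      · rw [mem_filter_univ, mem_filter_univ, hmk]
      · rw [← filter_image (p := (· ∈ J)), image_univ_of_surjective Quotient.mk_surjective,
          filter_univ_mem]
      · rw [← hρ.card_filter_mk_mem, hpreimage F ((mem_filter_univ F).1 hF)]
    _ = _ := by
      rw [← powerset_univ, sum_powerset_apply_card fun k ↦ g (3 * k), card_univ, hcard]

end IsTriangleRotation

end TriangleSets

section OneCycleCount

lemma matchingCount_of_even {k : ℕ} (hk : Even k) : matchingCount k = (k - 1)‼ := if_pos hk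

lemma matchingCount_of_odd {k : ℕ} (hk : Odd k) : matchingCount k = 0 :=
  if_neg (Nat.not_even_iff_odd.2 hk)

lemma sum_range_two_mul {M : Type*} [AddCommMonoid M] (f : ℕ → M) (n : ℕ) :
    ∑ j ∈ range (2 * n), f j = ∑ p ∈ range n, (f (2 * p) + f (2 * p + 1)) := by
  induction n with
  | zero => rfl
  | succ n ih => rw [mul_add_one, sum_range_succ, sum_range_succ, sum_range_succ, ih, add_assoc]

variable {X : Type*} [Fintype X] [DecidableEq X] {ρ : Perm X}

namespace IsTriangleRotation

lemma card_filter_forall_sameCycle (hρ : IsTriangleRotation ρ) {M : ℕ}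
    (hX : Fintype.card X = 3 * (M + 1)) :
    (#{ω : Perm X | IsPerfectMatching ω ∧ ∀ a b, (ω * ρ).SameCycle a b} : ℤ) =
      ∑ j ∈ range (M + 1), (M.choose j : ℤ) * ((-1) ^ (3 * j + 1) * ((-1) ^ ((3 * j + 1) / 2) *
        (matchingCount (3 * j + 1) * matchingCount (3 * (M + 1) - (3 * j + 1))))) := by
  set T : ℕ → ℤ := fun k ↦ (-1) ^ (k + 1) * ((-1) ^ ((k + 1) / 2) *
    (matchingCount (k + 1) * matchingCount (3 * (M + 1) - (k + 1))))
  have hsum := hρ.card_mul_card_filter_forall_sameCycle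
  rw [hX, hρ.sum_preserves_card hX fun k ↦ (((3 * (M + 1) : ℕ) : ℤ) - k) * T k, sum_range_succ,
    sub_self, zero_mul, smul_zero, add_zero] at hsum
  have hchoose (j : ℕ) (hj : j ∈ range (M + 1)) :
      (M + 1).choose j • ((((3 * (M + 1) : ℕ) : ℤ) - (3 * j : ℕ)) * T (3 * j)) =
        (3 * (M + 1) : ℕ) * (M.choose j * T (3 * j)) := by
    have h := congrArg (Nat.cast (R := ℤ)) (Nat.choose_mul_succ_eq M j)
    rw [Nat.cast_mul, Nat.cast_mul, Nat.cast_sub (by have := mem_range.1 hj; omega)] at h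
    push_cast at h ⊢
    linear_combination -3 * T (3 * j) * h
  rw [sum_congr rfl hchoose, ← mul_sum] at hsum
  exact mul_left_cancel₀ (Nat.cast_ne_zero.2 (by omega)) hsum

lemma card_filter_forall_sameCycle_of_card_eq_six_mul (hρ : IsTriangleRotation ρ) {K : ℕ}
    (hX : Fintype.card X = 6 * (K + 1)) :
    (#{ω : Perm X | IsPerfectMatching ω ∧ ∀ a b, (ω * ρ).SameCycle a b} : ℤ) =
      ∑ p ∈ range (K + 1),
        (-1 : ℤ) ^ p * ((2 * K + 1).choose (2 * p + 1) * ((6 * p + 3)‼ * (6 * (K - p) + 1)‼)) := by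
  rw [hρ.card_filter_forall_sameCycle (M := 2 * K + 1) (by omega),
    show 2 * K + 1 + 1 = 2 * (K + 1) by ring, sum_range_two_mul]
  refine sum_congr rfl fun p hp ↦ ?_
  have hp : p ≤ K := Nat.lt_succ_iff.1 (mem_range.1 hp)
  have hodd : matchingCount (3 * (2 * p) + 1) = 0 := matchingCount_of_odd ⟨3 * p, by ring⟩
  have heven : matchingCount (3 * (2 * p + 1) + 1) = (6 * p + 3)‼ := by
    rw [matchingCount_of_even ⟨3 * p + 2, by ring⟩]
    congr 1
    omega
  have heven' : matchingCount (3 * (2 * (K + 1)) - (3 * (2 * p + 1) + 1)) =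
      (6 * (K - p) + 1)‼ := by
    rw [matchingCount_of_even ⟨3 * (K - p) + 1, by omega⟩]
    congr 1
    omega
  have hsign : (-1 : ℤ) ^ (3 * (2 * p + 1) + 1) = 1 := Even.neg_one_pow ⟨3 * p + 2, by ring⟩
  have hsign' : (-1 : ℤ) ^ ((3 * (2 * p + 1) + 1) / 2) = (-1) ^ p := by
    rw [show (3 * (2 * p + 1) + 1) / 2 = p + 2 * (p + 1) by omega, pow_add, pow_mul, neg_one_sq,
      one_pow, mul_one]
  rw [hodd, heven, heven', hsign, hsign']
  push_cast
  ring

end IsTriangleRotation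

end OneCycleCount

section InvChooseSum

/-- The sum of the reciprocals of the binomial coefficients `n.choose k`. -/
noncomputable def invChooseSum (n : ℕ) : ℝ := ∑ k ∈ range (n + 1), (n.choose k : ℝ)⁻¹

lemma inv_choose_add_inv_choose_succ {n k : ℕ} (hk : k ≤ n) :
    ((n + 1).choose k : ℝ)⁻¹ + ((n + 1).choose (k + 1) : ℝ)⁻¹ =
      (n + 2) / (n + 1) * (n.choose k : ℝ)⁻¹ := by
  have hpos (i j : ℕ) (hij : j ≤ i) : (i.choose j : ℝ) ≠ 0 :=
    Nat.cast_ne_zero.2 (Nat.choose_pos hij).ne'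
  have hleft : ((n + 1).choose k : ℝ)⁻¹ = (n + 1 - k) / (n + 1) * (n.choose k : ℝ)⁻¹ := by
    have h := congrArg (Nat.cast (R := ℝ)) (Nat.choose_mul_succ_eq n k)
    rw [Nat.cast_mul, Nat.cast_mul, Nat.cast_sub (by omega)] at h
    field_simp [hpos n k hk, hpos (n + 1) k (by omega)]
    push_cast at h
    linear_combination h
  have hright : ((n + 1).choose (k + 1) : ℝ)⁻¹ = (k + 1) / (n + 1) * (n.choose k : ℝ)⁻¹ := by
    have h := congrArg (Nat.cast (R := ℝ)) (Nat.add_one_mul_choose_eq n k)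
    field_simp [hpos n k hk, hpos (n + 1) (k + 1) (by omega)]
    push_cast at h
    linear_combination h
  rw [hleft, hright]
  ring

lemma invChooseSum_succ (n : ℕ) :
    invChooseSum (n + 1) = 1 + (n + 2) / (2 * (n + 1)) * invChooseSum n := by
  have hlast : invChooseSum (n + 1) = ∑ k ∈ range (n + 1), ((n + 1).choose k : ℝ)⁻¹ + 1 := by
    rw [invChooseSum, sum_range_succ, Nat.choose_self, Nat.cast_one, inv_one]
  have hfirst : invChooseSum (n + 1) =
      ∑ k ∈ range (n + 1), ((n + 1).choose (k + 1) : ℝ)⁻¹ + 1 := by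
    rw [invChooseSum, sum_range_succ', Nat.choose_zero_right, Nat.cast_one, inv_one]
  have hsum : ∑ k ∈ range (n + 1), (((n + 1).choose k : ℝ)⁻¹ + ((n + 1).choose (k + 1) : ℝ)⁻¹) =
      (n + 2) / (n + 1) * invChooseSum n := by
    rw [invChooseSum, mul_sum]
    exact sum_congr rfl fun k hk ↦
      inv_choose_add_inv_choose_succ (Nat.lt_succ_iff.1 (mem_range.1 hk))
  rw [sum_add_distrib] at hsum
  have hhalf : ((n : ℝ) + 2) / (2 * (n + 1)) = (n + 2) / (n + 1) / 2 := by rw [div_div, mul_comm 2]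
  rw [hhalf]
  linear_combination (1 / 2) * hlast + (1 / 2) * hfirst + (1 / 2) * hsum

lemma invChooseSum_le {n : ℕ} (hn : 4 ≤ n) : invChooseSum n ≤ 2 + 4 / n := by
  induction n, hn using Nat.le_induction with
  | base => norm_num [invChooseSum, sum_range_succ, Nat.choose]
  | succ n hn ih =>
    have hn' : (4 : ℝ) ≤ n := by exact_mod_cast hn
    calc
      invChooseSum (n + 1) = 1 + (n + 2) / (2 * (n + 1)) * invChooseSum n := invChooseSum_succ n
      _ ≤ 1 + (n + 2) / (2 * (n + 1)) * (2 + 4 / n) := by gcongr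
      _ = 2 + (3 + 4 / n) / (n + 1) := by field_simp; ring
      _ ≤ 2 + 4 / (n + 1 : ℕ) := by
        have : 4 / (n : ℝ) ≤ 1 := (div_le_one (by linarith)).2 hn'
        push_cast
        gcongr
        linarith

end InvChooseSum

section AlternatingSum

lemma mul_le_of_monotone_ratio {R : Type*} [CommSemiring R] [PartialOrder R] [IsOrderedRing R]
    {u c : ℕ → R} (hu₀ : u 0 = 1) (hu : ∀ k, u (k + 1) = c k * u k) (hc : Monotone c)
    (hc₀ : 0 ≤ c 0) (p q : ℕ) : u p * u q ≤ u (p + q) := by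
  have hc_nonneg (k : ℕ) : 0 ≤ c k := hc₀.trans (hc k.zero_le)
  have hu_nonneg (k : ℕ) : 0 ≤ u k := by
    induction k with
    | zero => exact hu₀ ▸ zero_le_one
    | succ k ih => exact hu k ▸ mul_nonneg (hc_nonneg k) ih
  induction p with
  | zero => rw [hu₀, one_mul, zero_add]
  | succ p ih =>
    calc
      u (p + 1) * u q = c p * (u p * u q) := by rw [hu, mul_assoc]
      _ ≤ c (p + q) * u (p + q) :=
        mul_le_mul (hc (Nat.le_add_right p q)) ih (mul_nonneg (hu_nonneg p) (hu_nonneg q))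
          (hc_nonneg _)
      _ = u (p + 1 + q) := by rw [← hu, add_right_comm]

/-- The weights in which the one-cycle count factors: the term of index `p` in
`card_filter_forall_sameCycle_of_card_eq_six_mul` is proportional to
`arcWeight p * arcWeight (K - p)`. -/
noncomputable def arcWeight (q : ℕ) : ℝ := (6 * q + 1)‼ / (2 * q)!

lemma arcWeight_zero : arcWeight 0 = 1 := by simp [arcWeight]

lemma arcWeight_pos (q : ℕ) : 0 < arcWeight q :=
  div_pos (Nat.cast_pos.2 (Nat.doubleFactorial_pos _)) (Nat.cast_pos.2 (Nat.factorial_pos _))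

lemma arcWeight_succ (q : ℕ) :
    arcWeight (q + 1) = (q + 1) * (54 - 3 / (2 * (q + 1) ^ 2)) * arcWeight q := by
  have hnum : (6 * (q + 1) + 1)‼ = (6 * q + 7) * ((6 * q + 5) * ((6 * q + 3) * (6 * q + 1)‼)) := rfl
  have hden : (2 * (q + 1))! = (2 * q + 2) * ((2 * q + 1) * (2 * q)!) := rfl
  rw [arcWeight, arcWeight, hnum, hden]
  push_cast
  field_simp
  ring

lemma arcWeight_mul_arcWeight_div_le (p q : ℕ) :
    arcWeight p * arcWeight q / arcWeight (p + q) ≤ ((p + q).choose p : ℝ)⁻¹ := by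
  have hmono : Monotone fun k : ℕ ↦ (54 - 3 / (2 * (k + 1) ^ 2) : ℝ) := fun i j hij ↦ by
    dsimp only
    gcongr
  have hsucc (k : ℕ) : arcWeight (k + 1) / (k + 1)! =
      (54 - 3 / (2 * (k + 1) ^ 2)) * (arcWeight k / k !) := by
    rw [arcWeight_succ, Nat.factorial_succ]
    push_cast
    field_simp
  have hmul := mul_le_of_monotone_ratio (u := fun k ↦ arcWeight k / k !)
    (by simp [arcWeight_zero]) hsucc hmono (by norm_num) p q
  have hw := arcWeight_pos (p + q)
  rw [Nat.cast_add_choose, div_le_iff₀ hw]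
  rw [div_mul_div_comm, div_le_iff₀ (by positivity)] at hmul
  refine hmul.trans_eq ?_
  field_simp

/-- The one-cycle count divided by `(6K + 3)‼`. -/
noncomputable def alternatingArcSum (K : ℕ) : ℝ :=
  ∑ p ∈ range (K + 1), (-1) ^ p * (arcWeight p * arcWeight (K - p) / arcWeight K)

lemma abs_alternatingArcSum_sub_two_le {K : ℕ} (hK : Even K) (hK₀ : K ≠ 0) :
    |alternatingArcSum K - 2| ≤ invChooseSum K - 2 := by
  obtain ⟨n, rfl⟩ := Nat.exists_eq_succ_of_ne_zero hK₀
  have hself : arcWeight (n + 1) / arcWeight (n + 1) = 1 := div_self (arcWeight_pos _).ne'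
  have hsum : alternatingArcSum (n + 1) - 2 = ∑ p ∈ range n, (-1) ^ (p + 1) *
      (arcWeight (p + 1) * arcWeight (n + 1 - (p + 1)) / arcWeight (n + 1)) := by
    rw [alternatingArcSum, sum_range_succ, sum_range_succ', Nat.sub_zero, Nat.sub_self,
      arcWeight_zero, one_mul, mul_one, hself, hK.neg_one_pow, pow_zero]
    ring
  have hinv : invChooseSum (n + 1) - 2 =
      ∑ p ∈ range n, ((n + 1).choose (p + 1) : ℝ)⁻¹ := by
    rw [invChooseSum, sum_range_succ, sum_range_succ', Nat.choose_self, Nat.choose_zero_right,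
      Nat.cast_one]
    ring
  rw [hsum, hinv]
  refine (abs_sum_le_sum_abs _ _).trans (sum_le_sum fun p hp ↦ ?_)
  have hp : p + 1 + (n + 1 - (p + 1)) = n + 1 := by have := mem_range.1 hp; omega
  have hle := arcWeight_mul_arcWeight_div_le (p + 1) (n + 1 - (p + 1))
  rw [hp] at hle
  rw [abs_mul, abs_neg_one_pow, one_mul, abs_of_pos]
  · exact hle
  · exact div_pos (mul_pos (arcWeight_pos _) (arcWeight_pos _)) (arcWeight_pos _)

lemma tendsto_alternatingArcSum_two_mul :
    Tendsto (fun g ↦ alternatingArcSum (2 * g)) atTop (𝓝 2) := by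
  have hbound : ∀ᶠ g : ℕ in atTop, ‖alternatingArcSum (2 * g) - 2‖ ≤ 2 / (g : ℝ) := by
    filter_upwards [eventually_ge_atTop 2] with g hg
    have habs := abs_alternatingArcSum_sub_two_le (even_two_mul g) (by omega)
    have hle := invChooseSum_le (n := 2 * g) (by omega)
    have hdiv : (4 : ℝ) / (2 * g : ℕ) = 2 / g := by
      rw [Nat.cast_mul, Nat.cast_two, ← div_div]
      norm_num
    rw [Real.norm_eq_abs]
    linarith
  exact tendsto_sub_nhds_zero_iff.1
    (squeeze_zero_norm' hbound (tendsto_const_div_atTop_nhds_zero_nat 2))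

end AlternatingSum

section Asymptotics

lemma choose_mul_doubleFactorial_mul_doubleFactorial {p K : ℕ} (hp : p ≤ K) :
    ((2 * K + 1).choose (2 * p + 1) : ℝ) * ((6 * p + 3)‼ * (6 * (K - p) + 1)‼) =
      (6 * K + 3)‼ * (arcWeight p * arcWeight (K - p) / arcWeight K) := by
  obtain ⟨q, rfl⟩ := Nat.exists_eq_add_of_le hp
  have hdouble (r : ℕ) : ((6 * r + 1)‼ : ℝ) = (2 * r)! * arcWeight r := by
    rw [arcWeight, mul_div_cancel₀ _ (Nat.cast_ne_zero.2 (Nat.factorial_ne_zero _))]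
  have hdouble' (r : ℕ) : ((6 * r + 3)‼ : ℝ) = 3 * ((2 * r + 1)! * arcWeight r) := by
    rw [Nat.doubleFactorial_add_two, Nat.factorial_succ]
    push_cast
    rw [hdouble]
    ring
  have hw := (arcWeight_pos (p + q)).ne'
  rw [Nat.add_sub_cancel_left, show 2 * (p + q) + 1 = 2 * p + 1 + 2 * q by ring,
    Nat.cast_add_choose, hdouble q, hdouble' p, hdouble' (p + q),
    show 2 * p + 1 + 2 * q = 2 * (p + q) + 1 by ring]
  field_simp

lemma IsTriangleRotation.natCard_forall_sameCycle {X : Type*} [Fintype X] {ρ : Perm X}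
    (hρ : IsTriangleRotation ρ) {K : ℕ} (hX : Fintype.card X = 6 * (K + 1)) :
    (Nat.card {ω : {ω : Perm X // IsPerfectMatching ω} // ∀ a b, (ω.1 * ρ).SameCycle a b} : ℝ) =
      (6 * K + 3)‼ * alternatingArcSum K := by
  classical
  have hcard : Nat.card {ω : {ω : Perm X // IsPerfectMatching ω} //
      ∀ a b, (ω.1 * ρ).SameCycle a b} =
      #{ω : Perm X | IsPerfectMatching ω ∧ ∀ a b, (ω * ρ).SameCycle a b} := by
    rw [← Fintype.card_subtype, ← Nat.card_eq_fintype_card]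
    exact Nat.card_congr (Equiv.subtypeSubtypeEquivSubtypeInter IsPerfectMatching
      fun ω : Perm X ↦ ∀ a b, (ω * ρ).SameCycle a b)
  have hcount := congrArg (Int.cast (R := ℝ))
    (hρ.card_filter_forall_sameCycle_of_card_eq_six_mul hX)
  push_cast at hcount
  rw [hcard, hcount, alternatingArcSum, mul_sum]
  refine sum_congr rfl fun p hp ↦ ?_
  rw [choose_mul_doubleFactorial_mul_doubleFactorial (Nat.lt_succ_iff.1 (mem_range.1 hp)),
    mul_left_comm]

lemma tendsto_doubleFactorial_div :
    Tendsto (fun m : ℕ ↦ ((2 * m - 1)‼ : ℝ) / (√2 * (2 * m / exp 1) ^ m)) atTop (𝓝 1) := by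
  have hpi : √Real.pi ≠ 0 := by positivity
  have hratio : Tendsto (fun m ↦ Stirling.stirlingSeq (2 * m) / Stirling.stirlingSeq m) atTop
      (𝓝 1) := by
    rw [← div_self hpi]
    exact (Stirling.tendsto_stirlingSeq_sqrt_pi.comp (tendsto_id.const_mul_atTop' two_pos)).div
      Stirling.tendsto_stirlingSeq_sqrt_pi hpi
  refine hratio.congr' ?_
  filter_upwards [eventually_ge_atTop 1] with m hm
  have : (0 : ℝ) < m := Nat.cast_pos.2 hm
  have hfact : ((2 * m)! : ℝ) = (2 * m - 1)‼ * (2 ^ m * m !) := by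
    exact_mod_cast factorial_two_mul m
  have hsqrt : √(2 * ((2 * m : ℕ) : ℝ)) = √2 * √(2 * m) := by
    rw [← Real.sqrt_mul zero_le_two, Nat.cast_mul, Nat.cast_two]
  rw [Stirling.stirlingSeq, Stirling.stirlingSeq, hfact, hsqrt]
  push_cast
  rw [pow_mul', sq, div_pow (m : ℝ), div_pow (2 * (m : ℝ)), mul_pow]
  field_simp

lemma isTriangleRotation_rho (N : ℕ) : IsTriangleRotation (rho N) where
  apply_apply_apply a := Fin.ext <| by
    change 3 * ((rhoFun (rhoFun a)).val / 3) + ((rhoFun (rhoFun a)).val + 1) % 3 = a.val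
    simp only [rhoFun]
    omega
  apply_ne a h := by
    have := congrArg Fin.val h
    change 3 * (a.val / 3) + (a.val + 1) % 3 = a.val at this
    omega

lemma natCard_oneOrbit (g : ℕ) :
    (Nat.card {ω : Omega (4 * g + 2) // OneOrbit ω} : ℝ) =
      (12 * g + 3)‼ * alternatingArcSum (2 * g) := by
  have hcard : Fintype.card (Fin (3 * (4 * g + 2))) = 6 * (2 * g + 1) := by
    rw [Fintype.card_fin]
    ring
  have hcount := (isTriangleRotation_rho _).natCard_forall_sameCycle hcard
  rwa [show 6 * (2 * g) = 12 * g by ring] at hcount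

lemma natCard_oneOrbit_div_eq (g : ℕ) :
    (Nat.card {ω : Omega (4 * g + 2) // OneOrbit ω} : ℝ) /
        (2 * √2 / (3 * (4 * g + 2 : ℕ)) *
          ((3 * (4 * g + 2 : ℕ)) / exp 1) ^ ((3 * (4 * g + 2 : ℕ) : ℝ) / 2)) =
      ((2 * (6 * g + 3) - 1)‼ : ℝ) / (√2 * (2 * (6 * g + 3 : ℕ) / exp 1) ^ (6 * g + 3)) *
        (alternatingArcSum (2 * g) / 2) * (1 + 1 / (12 * g + 5)) := by
  have hpow : ((3 * (4 * g + 2 : ℕ)) / exp 1) ^ ((3 * (4 * g + 2 : ℕ) : ℝ) / 2) =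
      (2 * (6 * g + 3 : ℕ) / exp 1) ^ (6 * g + 3) := by
    rw [← Real.rpow_natCast]
    congr 1 <;> push_cast <;> ring
  have hdouble : (2 * (6 * g + 3) - 1)‼ = (12 * g + 5) * (12 * g + 3)‼ := by
    rw [show 2 * (6 * g + 3) - 1 = 12 * g + 3 + 2 by omega, Nat.doubleFactorial_add_two]
  rw [natCard_oneOrbit, hpow, hdouble]
  push_cast
  field_simp
  ring

lemma tendsto_natCard_oneOrbit_div :
    Tendsto (fun g : ℕ ↦ (Nat.card {ω : Omega (4 * g + 2) // OneOrbit ω} : ℝ) /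
      (2 * √2 / (3 * (4 * g + 2 : ℕ)) *
        ((3 * (4 * g + 2 : ℕ)) / exp 1) ^ ((3 * (4 * g + 2 : ℕ) : ℝ) / 2))) atTop (𝓝 1) := by
  have hindex : Tendsto (fun g ↦ 6 * g + 3) atTop atTop :=
    tendsto_atTop_mono (fun g ↦ show g ≤ 6 * g + 3 by omega) tendsto_id
  have hcorrection : Tendsto (fun g : ℕ ↦ 1 + 1 / (12 * (g : ℝ) + 5)) atTop (𝓝 (1 + 0)) :=
    (tendsto_const_nhds.div_atTop (tendsto_atTop_add_const_right _ _
      (tendsto_natCast_atTop_atTop.const_mul_atTop (by norm_num)))).const_add 1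
  have hprod := ((tendsto_doubleFactorial_div.comp hindex).mul
    (tendsto_alternatingArcSum_two_mul.div_const 2)).mul hcorrection
  rw [add_zero, div_self two_ne_zero, mul_one, mul_one] at hprod
  exact hprod.congr fun g ↦ (natCard_oneOrbit_div_eq g).symm

end Asymptotics

end OneVertexTriangulation

/-- Theorem (Petri, after Penner): the number of configurations giving a one-vertex
triangulated surface satisfies
`|{ω ∈ Ω_N : ω∘ρ has one orbit}| ∼ (2√2/(3N)) (3N/e)^{3N/2}` as `N → ∞`
through `N ≡ 2 (mod 4)`. -/
theorem one_vertex_configuration_count :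
    Tendsto
      (fun N : ℕ =>
        (Nat.card {ω : Omega N // OneOrbit ω} : ℝ) /
          (2 * Real.sqrt 2 / (3 * (N : ℝ)) *
            ((3 * (N : ℝ)) / Real.exp 1) ^ ((3 * (N : ℝ)) / 2)))
      (atTop ⊓ 𝓟 {N : ℕ | N % 4 = 2}) (𝓝 1) := by
  have hquot : Tendsto (fun N : ℕ ↦ N / 4) (atTop ⊓ 𝓟 {N : ℕ | N % 4 = 2}) atTop :=
    (Nat.tendsto_div_const_atTop (by norm_num)).mono_left inf_le_left
  refine (OneVertexTriangulation.tendsto_natCard_oneOrbit_div.comp hquot).congr' ?_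
  filter_upwards [mem_inf_of_right (mem_principal_self _)] with N hN
  have hN : 4 * (N / 4) + 2 = N := by
    rw [← Nat.div_add_mod N 4, show N % 4 = 2 from hN]
    omega
  rw [Function.comp_apply, hN]
end

section
/- Let I_{g,1} denote the number of isomorphism classes of one-vertex triangulations of the once-punctured genus-g surface, defined combinatorially as the number of orbits of the conjugation action σ·ω = σωσ⁻¹ of the centralizer of ρ in the permutation group of Fin (3N), where N = 4g−2, on the set {ω ∈ Ω_N : ω∘ρ has exactly one orbit}. Then I_{g,1} ∼ (2/(3·√π·(4g−2)^{3/2}))·((12g−6)/e)^{2g−1} as g → ∞; that is, the ratio of I_{g,1} to this expression tends to 1. -/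
open Filter Real Topology

/-- Two one-orbit configurations encode isomorphic one-vertex triangulations exactly
when they are conjugate by a permutation commuting with `ρ`. -/
def TriIsoRel (g : ℕ) (t t' : {ω : Omega (4 * g - 2) // OneOrbit ω}) : Prop :=
  ∃ σ : Equiv.Perm (Fin (3 * (4 * g - 2))),
    σ * rho (4 * g - 2) = rho (4 * g - 2) * σ ∧ σ * t.val.val * σ⁻¹ = t'.val.val

/-- `Ig1 g`: the number of isomorphism classes of one-vertex triangulations of the
once-punctured genus-`g` surface, i.e. the number of orbits of the conjugation action
of the centralizer of `ρ` on the one-orbit configurations in `Ω_{4g-2}`. -/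
noncomputable def Ig1 (g : ℕ) : ℕ := Nat.card (Quot (TriIsoRel g))

/-!
By Burnside's lemma, `Ig1 g * |C(ρ)| = ∑ τ ∈ C(ρ), #{ω | ω fixed by τ}`, where `τ = 1` contributes
the number of labelled one-vertex triangulations with `4g - 2` triangles.

*The labelled count.* Dually, count one-boundary ribbon graphs with `t` trivalent nodes and `l`
leaves; let `n t l` be their number. Numbering the half-edges along the boundary turns slicing a
node into a question about the circular order of its three half-edges: of the two ways to join
three leaves to a node, exactly one keeps a single boundary, and, by a count of descents along the
nodes, exactly `(t + 2 - l) / 2` nodes can be sliced into three leaves without disconnecting the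
boundary (Chapuy's trisections). This gives `(t + 1) * n t (l + 3) = (t + 3 - l) * n (t + 1) l`.
Removing a leaf together with its node gives
`n (t + 1) (l + 1) = 3 * (t + 1) * (3 * t + l) * n t l`. Hence `n (t + 4) 0` is an explicit multiple
of `n t 0`, which solves to a product of factorials.

*Symmetric triangulations are rare.* An element `τ` of the centralizer that fixes a one-orbit `ω`
commutes with the transitive cyclic group generated by `ρ * ω`, so all its cycles have the same
length `q`. An involution commuting with `τ` is determined by an involution of the `12g / q` cycles
of `τ` and a shift on each of them, and similarly for a `τ` commuting with `ρ`. The total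
contribution of the `τ ≠ 1` is `exp O(g) * g ^ (5g)`, against `exp O(g) * g ^ (6g)` for `τ = 1`.

Stirling's formula then gives the asymptotics of both sides.
-/

namespace OneVertexTriangulation

open Equiv

/-! ### Permutations with a single orbit -/

section SingleOrbit

variable {A B H : Type*}

/-- A permutation all of whose points lie in one orbit. Unlike `Equiv.Perm.IsCycle`, this includes
the identity of a type with at most one point. -/
def SingleOrbit (f : Perm H) : Prop := ∀ a b, f.SameCycle a b

theorem sameCycle_map [Finite A] {f : Perm A} {g : Perm B} {p : A → B}
    (h : ∀ a, g.SameCycle (p a) (p (f a))) {a b : A} (hab : f.SameCycle a b) :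
    g.SameCycle (p a) (p b) := by
  obtain ⟨n, rfl⟩ := hab.exists_nat_pow_eq
  clear hab
  induction n with
  | zero => exact Perm.SameCycle.refl _ _
  | succ n ih =>
    rw [pow_succ', Perm.mul_apply]
    exact ih.trans (h _)

theorem mem_of_sameCycle_of_mapsTo [Finite H] {f : Perm H} {s : Set H} (hs : Set.MapsTo f s s)
    {a b : H} (ha : a ∈ s) (hab : f.SameCycle a b) : b ∈ s := by
  obtain ⟨n, rfl⟩ := hab.exists_nat_pow_eq
  rw [← Perm.iterate_eq_pow]
  exact hs.iterate n ha

theorem singleOrbit_of_sameCycle_apply [Finite H] {f g : Perm H} (hf : SingleOrbit f)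
    (h : ∀ x, g.SameCycle x (f x)) : SingleOrbit g :=
  fun a b => sameCycle_map (p := id) h (hf a b)

theorem singleOrbit_iff_of_retraction [Finite A] [Finite B] {f : Perm B} {g : Perm A}
    {i : A → B} {p : B → A} (hpi : ∀ a, p (i a) = a) (hi : ∀ a, f.SameCycle (i a) (i (g a)))
    (hp : ∀ b, g.SameCycle (p b) (p (f b))) (hip : ∀ b, f.SameCycle b (i (p b))) :
    SingleOrbit f ↔ SingleOrbit g := by
  constructor
  · intro hf a b
    have := sameCycle_map hp (hf (i a) (i b))
    rwa [hpi, hpi] at this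
  · intro hg b b'
    exact (hip b).trans ((sameCycle_map hi (hg _ _)).trans (hip b').symm)

theorem singleOrbit_iff_of_semiconj {f : Perm A} {g : Perm B} (e : A ≃ B)
    (h : ∀ x, e (f x) = g (e x)) : SingleOrbit f ↔ SingleOrbit g := by
  have hg : g = e.permCongr f := by
    ext b
    simp [permCongr_apply, h]
  subst hg
  have hpow (n : ℤ) (x : A) : ((e.permCongr f) ^ n) (e x) = e ((f ^ n) x) := by
    have hmap : e.permCongr (f ^ n) = (e.permCongr f) ^ n := map_zpow e.permCongrHom f n
    rw [← hmap, permCongr_apply, symm_apply_apply]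
  simp only [SingleOrbit, e.forall_congr_right.symm, Perm.SameCycle, hpow, e.apply_eq_iff_eq]

theorem SingleOrbit.exists_equiv_fin [Finite H] {f : Perm H} (hf : SingleOrbit f) :
    ∃ e : H ≃ Fin (Nat.card H), ∀ x, e (f x) = finRotate _ (e x) := by
  obtain hn | hn := Nat.lt_or_ge (Nat.card H) 2
  · have : Subsingleton (Fin (Nat.card H)) := Fin.subsingleton_iff_le_one.2 (by lia)
    exact ⟨Finite.equivFin H, fun x => Subsingleton.elim _ _⟩
  have e₀ := Finite.equivFin H
  set g := e₀.permCongr f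
  have hg : SingleOrbit g := (singleOrbit_iff_of_semiconj e₀ (by simp [g])).1 hf
  have : Nontrivial (Fin (Nat.card H)) := Fin.nontrivial_iff_two_le.2 hn
  have hg_ne (x) : g x ≠ x := fun hx =>
    (exists_ne x).elim fun y hy => hy ((hg x y).eq_of_left hx).symm
  have hg_cycle : g.IsCycle := ⟨⟨0, by lia⟩, hg_ne _, fun y _ => hg _ y⟩
  have hg_supp : g.support = Finset.univ := by
    ext x
    simp [hg_ne]
  obtain ⟨c, hc⟩ := isConj_iff.1 <| hg_cycle.isConj (isCycle_finRotate_of_le hn)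
    (by rw [hg_supp, support_finRotate_of_le hn])
  refine ⟨e₀.trans c, fun x => ?_⟩
  rw [← hc]
  simp [g]

end SingleOrbit

/-! ### Multiplying a cyclic permutation by a 3-cycle -/

section ThreeCycle

variable {H : Type*} [DecidableEq H]

/-- The permutation `a ↦ b ↦ c ↦ a` when `a`, `b`, `c` are distinct. -/
def threeCycle (a b c : H) : Perm H := swap a b * swap b c

variable {a b c : H}

theorem threeCycle_apply_first (hab : a ≠ b) (hca : c ≠ a) : threeCycle a b c a = b := by
  rw [threeCycle, Perm.mul_apply, swap_apply_of_ne_of_ne hab hca.symm, swap_apply_left]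

theorem threeCycle_apply_second (hbc : b ≠ c) (hca : c ≠ a) : threeCycle a b c b = c := by
  rw [threeCycle, Perm.mul_apply, swap_apply_left, swap_apply_of_ne_of_ne hca hbc.symm]

theorem threeCycle_apply_third : threeCycle a b c c = a := by
  rw [threeCycle, Perm.mul_apply, swap_apply_right, swap_apply_right]

theorem threeCycle_apply_of_ne {x : H} (ha : x ≠ a) (hb : x ≠ b) (hc : x ≠ c) :
    threeCycle a b c x = x := by
  rw [threeCycle, Perm.mul_apply, swap_apply_of_ne_of_ne hb hc, swap_apply_of_ne_of_ne ha hb]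

theorem threeCycle_rotate (hab : a ≠ b) (hca : c ≠ a) : threeCycle b c a = threeCycle a b c := by
  rw [threeCycle, mul_swap_eq_swap_mul, swap_apply_right, swap_apply_of_ne_of_ne hab hca.symm,
    swap_comm b a, threeCycle]

theorem threeCycle_inv : (threeCycle a b c)⁻¹ = threeCycle c b a := by
  rw [threeCycle, threeCycle, mul_inv_rev, swap_inv, swap_inv, swap_comm b c, swap_comm a b]

theorem map_threeCycle {H' : Type*} [DecidableEq H'] {e : H → H'} (he : e.Injective) (x : H) :
    e (threeCycle a b c x) = threeCycle (e a) (e b) (e c) (e x) := by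
  simp only [threeCycle, Perm.mul_apply, he.swap_apply]

end ThreeCycle

section CircularOrder

theorem singleOrbit_finRotate (n : ℕ) : SingleOrbit (finRotate n) := by
  obtain hn | hn := Nat.lt_or_ge n 2
  · have : Subsingleton (Fin n) := Fin.subsingleton_iff_le_one.2 (by lia)
    intro a b
    rw [Subsingleton.elim a b]
  · have hsupp (a : Fin n) : finRotate n a ≠ a := by
      rw [← Perm.mem_support, support_finRotate_of_le hn]
      exact Finset.mem_univ a
    exact fun a b => (isCycle_finRotate_of_le hn).sameCycle (hsupp a) (hsupp b)

theorem val_finRotate {n : ℕ} (i : Fin n) :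
    (finRotate n i : ℕ) = if (i : ℕ) + 1 = n then 0 else (i : ℕ) + 1 := by
  obtain _ | n := n
  · exact i.elim0
  · rw [coe_finRotate]
    simp [Fin.ext_iff]

variable {n : ℕ} {a b c : Fin n}

theorem sameCycle_mul_finRotate_of_le {z : Perm (Fin n)} (hab : a ≤ b)
    (hz : ∀ x ∈ Set.Ioc a b, z x = x) : (z * finRotate n).SameCycle a b := by
  obtain ⟨k, hk⟩ := Nat.exists_eq_add_of_le (Fin.le_def.1 hab)
  induction k generalizing b with
  | zero => rw [Fin.ext (by lia : (a : ℕ) = b)]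
  | succ k ih =>
    let b' : Fin n := ⟨a + k, by lia⟩
    have hb' : b' < b := Fin.lt_def.2 (by simp only [b']; lia)
    have hrot : finRotate n b' = b := Fin.ext (by rw [val_finRotate]; simp only [b']; lia)
    have hstep : (z * finRotate n) b' = b := by
      rw [Perm.mul_apply, hrot, hz b ⟨Fin.lt_def.2 (by lia), le_rfl⟩]
    rw [← hstep, Perm.sameCycle_apply_right]
    exact ih (Fin.le_def.2 (by simp only [b']; lia))
      (fun x hx => hz x ⟨hx.1, hx.2.trans hb'.le⟩) rfl

theorem sameCycle_mul_finRotate_of_lt {z : Perm (Fin n)} (hab : a < b)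
    (hz : ∀ x ∈ Set.Ioo a b, z x = x) : (z * finRotate n).SameCycle a (z b) := by
  let b' : Fin n := ⟨b - 1, by lia⟩
  have hb' : b' < b := Fin.lt_def.2 (by simp only [b']; lia)
  have hrot : finRotate n b' = b := Fin.ext (by rw [val_finRotate]; simp only [b']; lia)
  rw [← hrot, ← Perm.mul_apply, Perm.sameCycle_apply_right]
  exact sameCycle_mul_finRotate_of_le (Fin.le_def.2 (by simp only [b']; lia))
    fun x hx => hz x ⟨hx.1, hx.2.trans_lt hb'⟩

theorem singleOrbit_threeCycle_mul_finRotate (hab : a < b) (hbc : b < c) :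
    SingleOrbit (threeCycle a b c * finRotate n) := by
  have hca := (hab.trans hbc).ne'
  have hac : (threeCycle a b c * finRotate n).SameCycle a c := by
    have := sameCycle_mul_finRotate_of_lt (z := threeCycle a b c) hab fun x hx =>
      threeCycle_apply_of_ne hx.1.ne' hx.2.ne (hx.2.trans hbc).ne
    rwa [threeCycle_apply_second hbc.ne hca] at this
  have hba : (threeCycle a b c * finRotate n).SameCycle b a := by
    have := sameCycle_mul_finRotate_of_lt (z := threeCycle a b c) hbc fun x hx =>
      threeCycle_apply_of_ne (hab.trans hx.1).ne' hx.1.ne' hx.2.ne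
    rwa [threeCycle_apply_third] at this
  refine singleOrbit_of_sameCycle_apply (singleOrbit_finRotate n) fun x => ?_
  rw [← Perm.sameCycle_apply_left, Perm.mul_apply]
  generalize finRotate n x = y
  by_cases ha : y = a
  · rwa [ha, threeCycle_apply_first hab.ne hca]
  by_cases hb : y = b
  · rw [hb, threeCycle_apply_second hbc.ne hca]
    exact (hba.trans hac).symm
  by_cases hc : y = c
  · rwa [hc, threeCycle_apply_third]
  rw [threeCycle_apply_of_ne ha hb hc]

theorem not_singleOrbit_threeCycle_mul_finRotate (hac : a < c) (hcb : c < b) :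
    ¬SingleOrbit (threeCycle a b c * finRotate n) := by
  intro h
  have hmaps : Set.MapsTo (threeCycle a b c * finRotate n) (Set.Ico a c) (Set.Ico a c) := by
    intro x ⟨hax, hxc⟩
    have hrot : (finRotate n x : ℕ) = x + 1 := by
      rw [val_finRotate, if_neg (by lia)]
    rw [Perm.mul_apply]
    obtain hy | hy := eq_or_ne (finRotate n x) c
    · rw [hy, threeCycle_apply_third]
      exact ⟨le_rfl, hac⟩
    · have hya : a < finRotate n x := Fin.lt_def.2 (by lia)
      have hyc : finRotate n x < c := lt_of_le_of_ne (Fin.le_def.2 (by lia)) hy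
      rw [threeCycle_apply_of_ne hya.ne' (hyc.trans hcb).ne hy]
      exact ⟨hya.le, hyc⟩
  exact (mem_of_sameCycle_of_mapsTo hmaps ⟨le_rfl, hac⟩ (h a b)).2.not_gt hcb

theorem singleOrbit_threeCycle_mul_finRotate_iff (hab : a ≠ b) (hbc : b ≠ c) (hca : c ≠ a) :
    SingleOrbit (threeCycle a b c * finRotate n) ↔ sbtw a b c := by
  have hrot₁ := threeCycle_rotate hab hca
  have hrot₂ := threeCycle_rotate hca hbc
  rw [Fin.sbtw_iff]
  constructor
  · intro h
    by_contra! hn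
    obtain h' | h' | h' : a < c ∧ c < b ∨ b < a ∧ a < c ∨ c < b ∧ b < a := by lia
    · exact not_singleOrbit_threeCycle_mul_finRotate h'.1 h'.2 h
    · exact not_singleOrbit_threeCycle_mul_finRotate h'.1 h'.2 (hrot₁ ▸ h)
    · exact not_singleOrbit_threeCycle_mul_finRotate h'.1 h'.2 (hrot₂ ▸ h)
  · rintro (h | h | h)
    · exact singleOrbit_threeCycle_mul_finRotate h.1 h.2
    · exact hrot₁ ▸ singleOrbit_threeCycle_mul_finRotate h.1 h.2
    · exact hrot₂ ▸ singleOrbit_threeCycle_mul_finRotate h.1 h.2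

theorem singleOrbit_threeCycle_mul_iff {H : Type*} [DecidableEq H] {f : Perm H} {a b c : H}
    (hab : a ≠ b) (hbc : b ≠ c) (hca : c ≠ a) (e : H ≃ Fin n)
    (he : ∀ x, e (f x) = finRotate n (e x)) :
    SingleOrbit (threeCycle a b c * f) ↔ sbtw (e a) (e b) (e c) := by
  rw [← singleOrbit_threeCycle_mul_finRotate_iff (e.injective.ne hab) (e.injective.ne hbc)
    (e.injective.ne hca)]
  refine singleOrbit_iff_of_semiconj e fun x => ?_
  rw [Perm.mul_apply, Perm.mul_apply, map_threeCycle e.injective, he]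

end CircularOrder

/-! ### Gluings -/

section Gluing

variable {H H' : Type*}

/-- A fixed-point-free involution, read as a partition of the half-edges into glued pairs. -/
def IsPairing (α : Perm H) : Prop := ∀ a, α (α a) = a ∧ α a ≠ a

/-- A pairing `α` of the half-edges whose ribbon graph, with vertices the cycles of `σ` (fixed
points included) and edges the pairs of `α`, has a single boundary component. -/
def IsGluing (σ α : Perm H) : Prop := IsPairing α ∧ SingleOrbit (σ * α)

/-- The number of one-boundary ribbon graphs with vertex rotation `σ` on labelled half-edges. -/
noncomputable def numGluings (σ : Perm H) : ℕ := {α | IsGluing σ α}.ncard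

theorem isPairing_permCongr_iff (e : H ≃ H') {α : Perm H} :
    IsPairing (e.permCongr α) ↔ IsPairing α := by
  simp only [IsPairing, ← e.forall_congr_right (q := fun _ => _ ∧ _), permCongr_apply,
    symm_apply_apply, e.apply_eq_iff_eq, ne_eq]

theorem isGluing_permCongr_iff {σ : Perm H} {σ' : Perm H'} (e : H ≃ H')
    (h : ∀ x, e (σ x) = σ' (e x)) {α : Perm H} :
    IsGluing σ' (e.permCongr α) ↔ IsGluing σ α :=
  and_congr (isPairing_permCongr_iff e)
    (singleOrbit_iff_of_semiconj e fun x => by simp [h]).symm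

theorem ncard_setOf_permCongr (e : H ≃ H') {P : Perm H → Prop} {Q : Perm H' → Prop}
    (h : ∀ α, Q (e.permCongr α) ↔ P α) : {α | Q α}.ncard = {α | P α}.ncard :=
  (Nat.card_congr (e.permCongr.subtypeEquiv fun α => (h α).symm)).symm

theorem numGluings_congr {σ : Perm H} {σ' : Perm H'} (e : H ≃ H')
    (h : ∀ x, e (σ x) = σ' (e x)) : numGluings σ' = numGluings σ :=
  ncard_setOf_permCongr e fun _ => isGluing_permCongr_iff e h

theorem two_mul_card_descents [Fintype H] [Nonempty H] {n : ℕ} {σ α : Perm H} (hα : IsPairing α)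
    (e : H ≃ Fin n) (he : ∀ x, e ((σ * α) x) = finRotate n (e x)) :
    2 * (Finset.univ.filter fun x => e (σ x) ≤ e x).card = n + 2 := by
  obtain ⟨x₀⟩ := ‹Nonempty H›
  let last : Fin n := ⟨n - 1, by have := (e x₀).isLt; lia⟩
  let d (x : H) : ℕ := if e (σ x) ≤ e x then 1 else 0
  let q (x : H) : ℕ := if e x = last then 1 else 0
  have hd (x : H) : d x + d (α x) = 1 + (q x + q (α x)) := by
    have hσα : e (σ (α x)) = finRotate n (e x) := he x
    have hσ : e (σ x) = finRotate n (e (α x)) := by rw [← he, Perm.mul_apply, (hα x).1]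
    have hne : (e x : ℕ) ≠ e (α x) := fun h => (hα x).2 (e.injective (Fin.ext h)).symm
    have := (e x).isLt
    have := (e (α x)).isLt
    simp only [d, q, hσα, hσ, Fin.le_def, Fin.ext_iff, last, val_finRotate]
    split_ifs <;> lia
  have hsum : ∑ x, (d x + d (α x)) = ∑ x, (1 + (q x + q (α x))) := by simp only [hd]
  have hq : ∑ x, q x = 1 := by
    rw [e.sum_comp fun i => if i = last then 1 else 0]
    simp
  have hd_sum : ∑ x, d x = (Finset.univ.filter fun x => e (σ x) ≤ e x).card := by simp [d]
  have hcard : Fintype.card H = n := by rw [Fintype.card_congr e, Fintype.card_fin]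
  rw [Finset.sum_add_distrib, Finset.sum_add_distrib, Finset.sum_add_distrib, sum_comp α d,
    sum_comp α q, hq, Finset.sum_const, Finset.card_univ, hcard, hd_sum] at hsum
  lia

variable [Finite H] [DecidableEq H]

theorem singleOrbit_reverse_threeCycle_mul_iff {f : Perm H} (hf : SingleOrbit f) {a b c : H}
    (hab : a ≠ b) (hbc : b ≠ c) (hca : c ≠ a) :
    SingleOrbit (threeCycle c b a * f) ↔ ¬SingleOrbit (threeCycle a b c * f) := by
  obtain ⟨e, he⟩ := hf.exists_equiv_fin
  have hab' := e.injective.ne hab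
  have hbc' := e.injective.ne hbc
  have hca' := e.injective.ne hca
  rw [singleOrbit_threeCycle_mul_iff hbc.symm hab.symm hca.symm e he,
    singleOrbit_threeCycle_mul_iff hab hbc hca e he, Fin.sbtw_iff, Fin.sbtw_iff]
  lia

theorem numGluings_eq_two_mul_of_fixed {σ : Perm H} {a b c : H} (ha : σ a = a)
    (hc : σ c = c) (hab : a ≠ b) (hbc : b ≠ c) (hca : c ≠ a) :
    numGluings σ = 2 * {α | IsGluing σ α ∧ IsGluing (threeCycle a b c * σ) α}.ncard := by
  have hswap (x : H) : swap a c (σ x) = σ (swap a c x) := by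
    rw [← Perm.mul_apply σ, mul_swap_eq_swap_mul, ha, hc, Perm.mul_apply]
  have hreverse (x : H) :
      swap a c ((threeCycle c b a * σ) x) = (threeCycle a b c * σ) (swap a c x) := by
    rw [Perm.mul_apply, Perm.mul_apply, map_threeCycle (swap a c).injective, hswap,
      swap_apply_left, swap_apply_right, swap_apply_of_ne_of_ne hab.symm hbc]
  have hsymm : {α | IsGluing σ α ∧ IsGluing (threeCycle a b c * σ) α}.ncard =
      {α | IsGluing σ α ∧ IsGluing (threeCycle c b a * σ) α}.ncard :=
    ncard_setOf_permCongr (swap a c) fun α => and_congr (isGluing_permCongr_iff _ hswap)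
      (isGluing_permCongr_iff _ hreverse)
  have hdiff : {α | IsGluing σ α} \ {α | IsGluing (threeCycle a b c * σ) α} =
      {α | IsGluing σ α ∧ IsGluing (threeCycle c b a * σ) α} := by
    ext α
    refine and_congr_right fun hα => ?_
    have := singleOrbit_reverse_threeCycle_mul_iff hα.2 hab hbc hca
    simp only [IsGluing, Set.mem_ofPred_eq, hα.1, mul_assoc, true_and, this]
  rw [numGluings, ← Set.ncard_inter_add_ncard_sdiff_eq_ncard _
    {α | IsGluing (threeCycle a b c * σ) α}, hdiff, ← hsymm, two_mul, Set.ofPred_and]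

end Gluing

/-! ### Slicing a trivalent node -/

section Slicing

/-- The half-edges of a ribbon graph with trivalent nodes `V`, each carrying three half-edges, and
leaves `L`. -/
abbrev HalfEdge (V L : Type*) := V × Fin 3 ⊕ L

variable {V L V' L' : Type*}

/-- The vertex rotation: cyclic on the three half-edges of each node, trivial on leaves. -/
def vertexRotation (V L : Type*) : Perm (HalfEdge V L) :=
  sumCongr (prodCongr (Equiv.refl V) (finRotate 3)) (Equiv.refl L)

theorem numGluings_vertexRotation_congr (eV : V ≃ V') (eL : L ≃ L') :
    numGluings (vertexRotation V' L') = numGluings (vertexRotation V L) :=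
  numGluings_congr (sumCongr (prodCongr eV (Equiv.refl _)) eL) (by rintro (⟨v, i⟩ | l) <;> rfl)

/-- The number of one-boundary ribbon graphs with `t` labelled trivalent nodes and `l` labelled
leaves. -/
noncomputable def numTrivalentGluings (t l : ℕ) : ℕ :=
  numGluings (vertexRotation (Fin t) (Fin l))

theorem numGluings_vertexRotation [Fintype V] [Fintype L] :
    numGluings (vertexRotation V L) =
      numTrivalentGluings (Fintype.card V) (Fintype.card L) :=
  (numGluings_vertexRotation_congr (Fintype.equivFin V) (Fintype.equivFin L)).symm

variable [DecidableEq V]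

/-- The three half-edges at the node `v`, in cyclic order. -/
def nodeCycle (L : Type*) [DecidableEq L] (v : V) : Perm (HalfEdge V L) :=
  threeCycle (.inl (v, 0)) (.inl (v, 1)) (.inl (v, 2))

/-- The vertex rotation after the node `v` has been sliced into three leaves. -/
def slicedRotation (L : Type*) (v : V) : Perm (HalfEdge V L) :=
  sumCongr (prodShear (Equiv.refl V) fun w => if w = v then 1 else finRotate 3) (Equiv.refl L)

theorem slicedRotation_apply_self (v : V) (i : Fin 3) :
    slicedRotation L v (.inl (v, i)) = .inl (v, i) := by
  simp [slicedRotation]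

theorem nodeCycle_mul_slicedRotation [DecidableEq L] (v : V) :
    nodeCycle L v * slicedRotation L v = vertexRotation V L := by
  ext x
  obtain ⟨w, i⟩ | l := x
  · obtain rfl | hw := eq_or_ne w v
    · rw [Perm.mul_apply, slicedRotation_apply_self, nodeCycle]
      fin_cases i
      · exact threeCycle_apply_first (by simp) (by simp)
      · exact threeCycle_apply_second (by simp) (by simp)
      · exact threeCycle_apply_third
    · have : slicedRotation L v (.inl (w, i)) = .inl (w, finRotate 3 i) := by
        simp [slicedRotation, hw]
      rw [Perm.mul_apply, this, nodeCycle, threeCycle_apply_of_ne] <;> simp [hw, vertexRotation]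
  · rw [Perm.mul_apply, nodeCycle, slicedRotation, sumCongr_apply, Sum.map_inr,
      threeCycle_apply_of_ne] <;> simp [vertexRotation]

theorem slicedRotation_eq [DecidableEq L] (v : V) : slicedRotation L v =
    threeCycle (.inl (v, 2)) (.inl (v, 1)) (.inl (v, 0)) * vertexRotation V L := by
  rw [← nodeCycle_mul_slicedRotation v, nodeCycle, ← threeCycle_inv, inv_mul_cancel_left]

theorem numGluings_slicedRotation (v : V) :
    numGluings (slicedRotation L v) = numGluings (vertexRotation {w // w ≠ v} (L ⊕ Fin 3)) := by
  let f : HalfEdge {w // w ≠ v} (L ⊕ Fin 3) → HalfEdge V L :=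
    Sum.elim (fun p => .inl (p.1, p.2)) (Sum.elim .inr fun i => .inl (v, i))
  have hf : f.Bijective := by
    constructor
    · rintro (⟨w, i⟩ | l | i) (⟨w', i'⟩ | l' | i') h <;> grind
    · rintro (⟨w, i⟩ | l)
      · by_cases hw : w = v
        · exact ⟨.inr (.inr i), by simp [f, hw]⟩
        · exact ⟨.inl (⟨w, hw⟩, i), rfl⟩
      · exact ⟨.inr (.inl l), rfl⟩
  refine numGluings_congr (ofBijective f hf) ?_
  rintro (⟨⟨w, hw⟩, i⟩ | l | i)
  · simp [f, slicedRotation, vertexRotation, hw]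
  · rfl
  · exact (slicedRotation_apply_self v i).symm

theorem numGluings_vertexRotation_slice [Finite V] [Finite L] (v : V) :
    numGluings (vertexRotation {w // w ≠ v} (L ⊕ Fin 3)) =
      2 * {α | IsGluing (vertexRotation V L) α ∧ IsGluing (slicedRotation L v) α}.ncard := by
  classical
  rw [← numGluings_slicedRotation, numGluings_eq_two_mul_of_fixed
    (slicedRotation_apply_self v 0) (slicedRotation_apply_self v 2) (b := .inl (v, 1))
    (by simp) (by simp) (by simp), ← nodeCycle, nodeCycle_mul_slicedRotation]
  simp only [and_comm]

open Classical in
theorem two_mul_card_sliced_add_card_leaves [Fintype V] [Fintype L] [Nonempty (HalfEdge V L)]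
    {α : Perm (HalfEdge V L)} (hα : IsGluing (vertexRotation V L) α) :
    2 * (Finset.univ.filter fun v : V => IsGluing (slicedRotation L v) α).card + Fintype.card L =
      Fintype.card V + 2 := by
  obtain ⟨e, he⟩ := hα.2.exists_equiv_fin
  have hdescents := two_mul_card_descents hα.1 e he
  let d (x : HalfEdge V L) : ℕ := if e (vertexRotation V L x) ≤ e x then 1 else 0
  have hnode (v : V) :
      ∑ i, d (.inl (v, i)) = 1 + if IsGluing (slicedRotation L v) α then 1 else 0 := by
    have hne (i j : Fin 3) (hij : i ≠ j) : e (.inl (v, i)) ≠ e (.inl (v, j)) :=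
      e.injective.ne (by simpa using hij)
    have hsliced : IsGluing (slicedRotation L v) α ↔
        sbtw (e (.inl (v, 2))) (e (.inl (v, 1))) (e (.inl (v, 0))) := by
      rw [IsGluing, and_iff_right hα.1, slicedRotation_eq, mul_assoc]
      exact singleOrbit_threeCycle_mul_iff (by simp) (by simp) (by simp) e he
    have h01 := hne 0 1 (by decide)
    have h12 := hne 1 2 (by decide)
    have h20 := hne 2 0 (by decide)
    simp only [hsliced, Fin.sbtw_iff, Fin.sum_univ_three, d]
    change (if e (.inl (v, 1)) ≤ _ then 1 else 0) + (if e (.inl (v, 2)) ≤ _ then 1 else 0) +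
      (if e (.inl (v, 0)) ≤ _ then 1 else 0) = _
    split_ifs <;> lia
  have hleaf (l : L) : d (.inr l) = 1 := if_pos le_rfl
  have hsum : ∑ x, d x = Fintype.card V +
      (Finset.univ.filter fun v : V => IsGluing (slicedRotation L v) α).card + Fintype.card L := by
    simp [Fintype.sum_sum_type, Fintype.sum_prod_type, hnode, hleaf, Finset.sum_add_distrib]
  rw [← Nat.cast_id (Finset.card _), ← Finset.sum_boole, hsum] at hdescents
  simp only [Nat.card_eq_fintype_card, Fintype.card_sum, Fintype.card_prod, Fintype.card_fin]
    at hdescents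
  lia

open Classical in
theorem two_mul_sum_ncard_sliced [Fintype V] [Fintype L] [Nonempty (HalfEdge V L)] :
    2 * ∑ v : V,
        {α | IsGluing (vertexRotation V L) α ∧ IsGluing (slicedRotation L v) α}.ncard +
      Fintype.card L * numGluings (vertexRotation V L) =
    (Fintype.card V + 2) * numGluings (vertexRotation V L) := by
  let gluings : Finset (Perm (HalfEdge V L)) := Finset.univ.filter (IsGluing (vertexRotation V L))
  have hcard : numGluings (vertexRotation V L) = gluings.card := by
    rw [numGluings, Set.ncard_eq_toFinset_card', Set.toFinset_ofPred]
  have hsliced (v : V) :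
      {α | IsGluing (vertexRotation V L) α ∧ IsGluing (slicedRotation L v) α}.ncard =
        (gluings.filter fun α => IsGluing (slicedRotation L v) α).card := by
    rw [Set.ncard_eq_toFinset_card', Set.toFinset_ofPred, Finset.filter_filter]
  have hdouble := Finset.sum_card_bipartiteAbove_eq_sum_card_bipartiteBelow (s := Finset.univ)
    (t := gluings) fun (v : V) α => IsGluing (slicedRotation L v) α
  simp only [Finset.bipartiteAbove, Finset.bipartiteBelow] at hdouble
  simp only [hcard, hsliced, hdouble]
  rw [Finset.mul_sum, mul_comm _ gluings.card, mul_comm _ gluings.card, ← smul_eq_mul,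
    ← smul_eq_mul gluings.card, ← Finset.sum_const, ← Finset.sum_const, ← Finset.sum_add_distrib]
  exact Finset.sum_congr rfl fun α hα =>
    two_mul_card_sliced_add_card_leaves (Finset.mem_filter.1 hα).2

theorem slicing_recursion (t l : ℕ) :
    (t + 1) * numTrivalentGluings t (l + 3) + l * numTrivalentGluings (t + 1) l =
      (t + 3) * numTrivalentGluings (t + 1) l := by
  have hslice (v : Fin (t + 1)) : 2 * {α | IsGluing (vertexRotation (Fin (t + 1)) (Fin l)) α ∧
      IsGluing (slicedRotation (Fin l) v) α}.ncard = numTrivalentGluings t (l + 3) := by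
    rw [← numGluings_vertexRotation_slice, numGluings_vertexRotation]
    simp
  have : Nonempty (HalfEdge (Fin (t + 1)) (Fin l)) := ⟨.inl (0, 0)⟩
  have h := two_mul_sum_ncard_sliced (V := Fin (t + 1)) (L := Fin l)
  simpa [Finset.mul_sum, hslice, numGluings_vertexRotation] using h

end Slicing

/-! ### Grafting a leaf -/

section Grafting

variable {H : Type*} {σ α : Perm H} {h : H}

theorem sameCycle_of_apply_eq {f : Perm H} {x y : H} (h : f x = y) : f.SameCycle x y :=
  h ▸ Perm.sameCycle_apply_right.2 (Perm.SameCycle.refl f x)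

theorem isPairing_sumCongr {H' : Type*} {β : Perm H'} :
    IsPairing (sumCongr α β) ↔ IsPairing α ∧ IsPairing β := by
  simp [IsPairing]

/-- The rotation of a trivalent node with half-edges `1`, `2`, `3` together with a leaf `0`. -/
def tripodRotation : Perm (Fin 4) := threeCycle 1 2 3

/-- The pairing that attaches the leaf `0` to the half-edge `1` and closes `2`, `3` to a loop. -/
def tripodPairing : Perm (Fin 4) := swap 0 1 * swap 2 3

theorem isPairing_tripodPairing : IsPairing tripodPairing := by
  unfold IsPairing; decide

theorem exists_inl_of_isGluing {γ : Perm (H ⊕ Fin 4)}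
    (hγ : IsGluing (sumCongr σ tripodRotation) γ) (h0 : γ (.inr 0) = .inr 1) :
    (∃ u, γ (.inr 2) = .inl u) ∧ ∃ v, γ (.inr 3) = .inl v := by
  obtain ⟨hpair, horbit⟩ := hγ
  have h1 : γ (.inr 1) = .inr 0 := by rw [← h0, (hpair _).1]
  have h32 : γ (.inr 3) ≠ .inr 2 := by
    intro h3
    have hfix : (sumCongr σ tripodRotation * γ) (.inr 3) = .inr 3 := by
      have : tripodRotation 2 = 3 := by decide
      simp [h3, this]
    exact absurd ((horbit (.inr 3) (.inr 0)).eq_of_left hfix) (by simp)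
  have hne (i : Fin 4) (hi : i = 2 ∨ i = 3) (j : Fin 4) : γ (.inr i) ≠ .inr j := by
    intro hij
    have hji : γ (.inr j) = .inr i := by rw [← hij, (hpair _).1]
    have hii := (hpair (.inr i)).2
    fin_cases j <;> grind
  constructor
  · rcases h2 : γ (.inr 2) with u | j
    · exact ⟨u, rfl⟩
    · exact (hne 2 (.inl rfl) j h2).elim
  · rcases h3 : γ (.inr 3) with v | j
    · exact ⟨v, rfl⟩
    · exact (hne 3 (.inr rfl) j h3).elim

variable [DecidableEq H]

/-- Graft a new leaf onto the edge `{h, α h}` of the pairing `α`: the edge is subdivided by a new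
trivalent node with half-edges `1`, `2`, `3`, of which `1` carries the new leaf `0`, while `2` and
`3` are paired with `h` and `α h`. As a permutation this is `α` next to `tripodPairing` with the
roles of `α h` and `2` exchanged. -/
def graft (α : Perm H) (h : H) : Perm (H ⊕ Fin 4) :=
  (swap (.inl (α h)) (.inr 2)).permCongr (sumCongr α tripodPairing)

theorem graft_apply_leaf : graft α h (.inr 0) = .inr 1 := by
  have : tripodPairing 0 = 1 := by decide
  simp [graft, swap_apply_def, this]

theorem graft_apply_corner_one : graft α h (.inr 1) = .inr 0 := by
  have : tripodPairing 1 = 0 := by decide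
  simp [graft, swap_apply_def, this]

theorem graft_apply_corner_two (hα : IsPairing α) : graft α h (.inr 2) = .inl h := by
  have := (hα h).2.symm
  simp [graft, swap_apply_def, this, (hα h).1]

theorem graft_apply_corner_three : graft α h (.inr 3) = .inl (α h) := by
  have : tripodPairing 3 = 2 := by decide
  simp [graft, swap_apply_def, this]

theorem graft_apply_self (hα : IsPairing α) : graft α h (.inl h) = .inr 2 := by
  have := (hα h).2.symm
  simp [graft, swap_apply_def, this]

theorem graft_apply_partner : graft α h (.inl (α h)) = .inr 3 := by
  have : tripodPairing 2 = 3 := by decide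
  simp [graft, swap_apply_def, this]

theorem graft_apply_of_ne {x : H} (hx : x ≠ h) (hx' : x ≠ α h) :
    graft α h (.inl x) = .inl (α x) := by
  simp [graft, swap_apply_def, hx, hx']

theorem isPairing_graft_iff : IsPairing (graft α h) ↔ IsPairing α := by
  rw [graft, isPairing_permCongr_iff, isPairing_sumCongr, and_iff_left isPairing_tripodPairing]

theorem rotation_mul_graft_apply_inr (hα : IsPairing α) :
    letI f := sumCongr σ tripodRotation * graft α h
    f (.inr 0) = .inr 2 ∧ f (.inr 1) = .inr 0 ∧ f (.inr 2) = .inl (σ h) ∧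
      f (.inr 3) = .inl (σ (α h)) := by
  have h0 : tripodRotation 0 = 0 := by decide
  have h1 : tripodRotation 1 = 2 := by decide
  simp [graft_apply_leaf, graft_apply_corner_one, graft_apply_corner_two hα,
    graft_apply_corner_three, h0, h1]

theorem rotation_mul_graft_apply_inl (hα : IsPairing α) :
    letI f := sumCongr σ tripodRotation * graft α h
    f (.inl h) = .inr 3 ∧ f (.inl (α h)) = .inr 1 ∧
      ∀ x, x ≠ h → x ≠ α h → f (.inl x) = .inl ((σ * α) x) := by
  have h2 : tripodRotation 2 = 3 := by decide
  have h3 : tripodRotation 3 = 1 := by decide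
  refine ⟨?_, ?_, fun x hx hx' => ?_⟩
  · simp [graft_apply_self hα, h2]
  · simp [graft_apply_partner, h3]
  · simp [graft_apply_of_ne hx hx']

theorem singleOrbit_graft_iff [Finite H] (hα : IsPairing α) :
    SingleOrbit (sumCongr σ tripodRotation * graft α h) ↔ SingleOrbit (σ * α) := by
  obtain ⟨f0, f1, f2, f3⟩ := rotation_mul_graft_apply_inr (σ := σ) (h := h) hα
  obtain ⟨fh, fαh, fne⟩ := rotation_mul_graft_apply_inl (σ := σ) (h := h) hα
  set f : Perm (H ⊕ Fin 4) := sumCongr σ tripodRotation * graft α h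
  have hσh : σ h = (σ * α) (α h) := by rw [Perm.mul_apply, (hα h).1]
  have c1 : f.SameCycle (.inl (α h)) (.inr 1) := sameCycle_of_apply_eq fαh
  have c0 := c1.trans (sameCycle_of_apply_eq f1)
  have c2 := c0.trans (sameCycle_of_apply_eq f0)
  have c3 : f.SameCycle (.inl h) (.inr 3) := sameCycle_of_apply_eq fh
  refine singleOrbit_iff_of_retraction (i := Sum.inl) (p := Sum.elim id ![α h, α h, α h, h])
    (fun _ => rfl) (fun x => ?_) ?_ ?_
  · obtain rfl | hx := eq_or_ne x h
    · exact c3.trans (sameCycle_of_apply_eq f3)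
    obtain rfl | hx' := eq_or_ne x (α h)
    · exact c2.trans (sameCycle_of_apply_eq (f2.trans (congrArg _ hσh)))
    exact sameCycle_of_apply_eq (fne x hx hx')
  · rintro (x | i)
    · obtain rfl | hx := eq_or_ne x h
      · rw [fh]
        exact .refl _ _
      obtain rfl | hx' := eq_or_ne x (α h)
      · rw [fαh]
        exact .refl _ _
      rw [fne x hx hx']
      exact sameCycle_of_apply_eq rfl
    · fin_cases i
      · rw [Fin.zero_eta, f0]
        exact .refl _ _
      · rw [Fin.mk_one, f1]
        exact .refl _ _
      · simp only [Fin.reduceFinMk, f2, hσh]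
        exact sameCycle_of_apply_eq rfl
      · simp only [Fin.reduceFinMk, f3]
        exact sameCycle_of_apply_eq rfl
  · rintro (x | i)
    · exact .refl _ _
    · fin_cases i
      exacts [c0.symm, c1.symm, c2.symm, c3.symm]

theorem isGluing_graft_iff [Finite H] :
    IsGluing (sumCongr σ tripodRotation) (graft α h) ↔ IsGluing σ α := by
  rw [IsGluing, IsGluing, isPairing_graft_iff]
  exact and_congr_right singleOrbit_graft_iff

theorem exists_graft_eq [Finite H] {γ : Perm (H ⊕ Fin 4)} (hγ : IsPairing γ)
    (h0 : γ (.inr 0) = .inr 1) {u v : H} (hu : γ (.inr 2) = .inl u) (hv : γ (.inr 3) = .inl v) :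
    ∃ α : Perm H, ∃ h, graft α h = γ := by
  have h1 : γ (.inr 1) = .inr 0 := by rw [← h0, (hγ _).1]
  have hu' : γ (.inl u) = .inr 2 := by rw [← hu, (hγ _).1]
  have hv' : γ (.inl v) = .inr 3 := by rw [← hv, (hγ _).1]
  have huv : u ≠ v := by
    rintro rfl
    simp [hu'] at hv'
  set s : Perm (H ⊕ Fin 4) := swap (.inl v) (.inr 2) with hs
  set δ : Perm (H ⊕ Fin 4) := s.permCongr γ with hδ
  have hδr (i : Fin 4) : δ (.inr i) = .inr (tripodPairing i) := by
    have : tripodPairing 0 = 1 ∧ tripodPairing 1 = 0 ∧ tripodPairing 2 = 3 ∧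
      tripodPairing 3 = 2 := by decide
    fin_cases i <;> simp [hδ, hs, swap_apply_def, this, h0, h1, hv, hv']
  have hδu : δ (.inl u) = .inl v := by simp [hδ, hs, swap_apply_def, huv, hu']
  have hmaps : Set.MapsTo δ (Set.range Sum.inl) (Set.range Sum.inl) := by
    rintro _ ⟨x, rfl⟩
    rcases hx : δ (.inl x) with y | i
    · exact ⟨y, rfl⟩
    · have := hδr i
      rw [← hx, ((isPairing_permCongr_iff s).2 hγ _).1] at this
      simp at this
  obtain ⟨⟨α, β⟩, hαβ⟩ := Perm.mem_sumCongrHom_range_of_perm_mapsTo_inl hmaps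
  have hδ_eq : sumCongr α β = δ := hαβ
  have hβ : β = tripodPairing := ext fun i => Sum.inr.inj ((hδ_eq ▸ hδr i :))
  have hαu : α u = v := Sum.inl.inj ((hδ_eq ▸ hδu :))
  refine ⟨α, u, ext fun x => ?_⟩
  rw [graft, hαu, ← hβ, hδ_eq, hδ]
  simp [hs]

theorem graft_injective {α α' : Perm H} {h h' : H} (hα : IsPairing α) (hα' : IsPairing α')
    (heq : graft α h = graft α' h') : α = α' ∧ h = h' := by
  have hh : h = h' := by
    rw [← Sum.inl.injEq (β := Fin 4), ← graft_apply_corner_two hα, heq,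
      graft_apply_corner_two hα']
  have hαh : α h = α' h' := by
    rw [← Sum.inl.injEq (β := Fin 4), ← graft_apply_corner_three, heq, graft_apply_corner_three]
  rw [graft, graft, hαh] at heq
  have := Perm.sumCongrHom_injective (a₁ := (α, tripodPairing)) (a₂ := (α', tripodPairing))
    ((swap _ _).permCongr.injective heq)
  exact ⟨(Prod.mk.inj this).1, hh⟩

omit [DecidableEq H] in
theorem ncard_isGluing_tripod [Finite H] :
    {γ | IsGluing (sumCongr σ tripodRotation) γ ∧ γ (.inr 0) = .inr 1}.ncard =
      numGluings σ * Nat.card H := by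
  classical
  have himage : {γ | IsGluing (sumCongr σ tripodRotation) γ ∧ γ (.inr 0) = .inr 1} =
      (fun p : Perm H × H => graft p.1 p.2) '' ({α | IsGluing σ α} ×ˢ Set.univ) := by
    ext γ
    constructor
    · rintro ⟨hγ, h0⟩
      obtain ⟨⟨u, hu⟩, v, hv⟩ := exists_inl_of_isGluing hγ h0
      obtain ⟨α, h, rfl⟩ := exists_graft_eq hγ.1 h0 hu hv
      exact ⟨(α, h), ⟨isGluing_graft_iff.1 hγ, trivial⟩, rfl⟩
    · rintro ⟨⟨α, h⟩, ⟨hα, -⟩, rfl⟩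
      exact ⟨isGluing_graft_iff.2 hα, graft_apply_leaf⟩
  rw [himage, Set.InjOn.ncard_image, Set.ncard_prod, Set.ncard_univ, numGluings]
  rintro ⟨α, h⟩ ⟨hα, -⟩ ⟨α', h'⟩ ⟨hα', -⟩ heq
  exact Prod.ext_iff.2 (graft_injective hα.1 hα'.1 heq)

end Grafting

section LeafRecursion

variable {V L : Type*}

theorem IsGluing.exists_apply_leaf_eq [Nonempty V] [Finite V] [Finite L] {γ : Perm (HalfEdge V L)}
    (hγ : IsGluing (vertexRotation V L) γ) (l : L) : ∃ p, γ (.inr l) = .inl p := by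
  rcases hl : γ (.inr l) with p | l'
  · exact ⟨p, rfl⟩
  have hl' : γ (.inr l') = .inr l := by rw [← hl, (hγ.1 _).1]
  have hmaps : Set.MapsTo (vertexRotation V L * γ) {.inr l, .inr l'} {.inr l, .inr l'} := by
    rintro _ (rfl | rfl)
    · simp [vertexRotation, hl]
    · simp [vertexRotation, hl']
  obtain ⟨v⟩ := ‹Nonempty V›
  have := mem_of_sameCycle_of_mapsTo hmaps (.inl rfl) (hγ.2 (.inr l) (.inl (v, 0)))
  simp at this

variable [Finite V] [Finite L]

theorem ncard_isGluing_leaf_corner (l : L) (v : V) (i : Fin 3) :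
    {γ | IsGluing (vertexRotation V L) γ ∧ γ (.inr l) = .inl (v, i)}.ncard =
      numGluings (vertexRotation {w // w ≠ v} {k // k ≠ l}) *
        Nat.card (HalfEdge {w // w ≠ v} {k // k ≠ l}) := by
  classical
  let f : HalfEdge {w // w ≠ v} {k // k ≠ l} ⊕ Fin 4 → HalfEdge V L :=
    Sum.elim (Sum.map (fun p => (p.1, p.2)) (↑))
      ![.inr l, .inl (v, i), .inl (v, i + 1), .inl (v, i + 2)]
  have hf : f.Bijective := by
    constructor
    · refine .sumElim (Sum.map_injective.2 ⟨?_, Subtype.val_injective⟩) ?_ ?_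
      · rintro ⟨⟨w, hw⟩, j⟩ ⟨⟨w', hw'⟩, j'⟩ h
        simpa using h
      · intro j j' h
        revert h
        fin_cases i <;> fin_cases j <;> fin_cases j' <;> simp
      · rintro (⟨⟨w, hw⟩, j⟩ | ⟨k, hk⟩) j' <;> fin_cases j' <;> simp [*]
    · rintro (⟨w, j⟩ | k)
      · obtain rfl | hw := eq_or_ne w v
        · refine ⟨.inr ((finRotate 4) (j - i).castSucc), ?_⟩
          fin_cases i <;> fin_cases j <;> rfl
        · exact ⟨.inl (.inl (⟨w, hw⟩, j)), rfl⟩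
      · obtain rfl | hk := eq_or_ne k l
        · exact ⟨.inr 0, rfl⟩
        · exact ⟨.inl (.inr ⟨k, hk⟩), rfl⟩
  let e := ofBijective f hf
  have he (x) : e (sumCongr (vertexRotation _ _) tripodRotation x) =
      vertexRotation V L (e x) := by
    obtain (⟨w, j⟩ | k) | j := x
    · rfl
    · rfl
    · fin_cases i <;> fin_cases j <;> rfl
  rw [← ncard_isGluing_tripod]
  refine ncard_setOf_permCongr e fun γ => and_congr (isGluing_permCongr_iff e he) ?_
  rw [permCongr_apply, ← eq_symm_apply]
  have h0 : e.symm (.inr l) = .inr 0 := e.symm_apply_eq.2 rfl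
  have h1 : e.symm (.inl (v, i)) = .inr 1 := e.symm_apply_eq.2 rfl
  rw [h0, h1]

end LeafRecursion

open Classical in
theorem leaf_recursion (t l : ℕ) : numTrivalentGluings (t + 1) (l + 1) =
    3 * (t + 1) * (3 * t + l) * numTrivalentGluings t l := by
  let gluings : Finset (Perm (HalfEdge (Fin (t + 1)) (Fin (l + 1)))) :=
    Finset.univ.filter (IsGluing (vertexRotation _ _))
  have hcorner (p : Fin (t + 1) × Fin 3) :
      (gluings.filter fun γ => γ (.inr 0) = .inl p).card =
        numTrivalentGluings t l * (t * 3 + l) := by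
    have h := ncard_isGluing_leaf_corner (0 : Fin (l + 1)) p.1 p.2
    rw [numGluings_vertexRotation, Set.ncard_eq_toFinset_card', Set.toFinset_ofPred,
      ← Finset.filter_filter] at h
    simpa using h
  have hcard : numTrivalentGluings (t + 1) (l + 1) = gluings.card := by
    rw [numTrivalentGluings, numGluings, Set.ncard_eq_toFinset_card', Set.toFinset_ofPred]
  have hmaps : Set.MapsTo (fun γ : Perm (HalfEdge (Fin (t + 1)) (Fin (l + 1))) => γ (.inr 0))
      gluings (Finset.univ.map
        (.inl : Fin (t + 1) × Fin 3 ↪ HalfEdge (Fin (t + 1)) (Fin (l + 1)))) := by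
    intro γ hγ
    obtain ⟨p, hp⟩ := (Finset.mem_filter.1 hγ).2.exists_apply_leaf_eq 0
    simp [hp]
  rw [hcard, Finset.card_eq_sum_card_fiberwise hmaps, Finset.sum_map]
  simp only [Function.Embedding.inl_apply, hcorner, Finset.sum_const, Finset.card_univ,
    Fintype.card_prod, Fintype.card_fin, smul_eq_mul]
  ring

theorem numTrivalentGluings_zero_two : numTrivalentGluings 0 2 = 1 := by
  have hcycle : SingleOrbit (swap (0 : Fin 2) 1) := by
    have hstep (a b : Fin 2) : a = b ∨ swap 0 1 a = b := by decide +revert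
    intro a b
    obtain rfl | h := hstep a b
    exacts [.refl _ _, sameCycle_of_apply_eq h]
  have hpairing (α : Perm (Fin 2)) : IsPairing α ↔ α = swap 0 1 := by
    unfold IsPairing
    decide +revert
  rw [numTrivalentGluings, numGluings_congr (σ := 1) (emptySum (Fin 0 × Fin 3) (Fin 2)).symm
    fun _ => rfl, numGluings, Set.ncard_eq_one]
  refine ⟨swap 0 1, Set.ext fun α => ?_⟩
  simp only [IsGluing, one_mul, Set.mem_ofPred_eq, Set.mem_singleton_iff, hpairing]
  exact and_iff_left_of_imp fun h => h ▸ hcycle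

/-! ### The closed formula -/

theorem numTrivalentGluings_add_four (n : ℕ) :
    (n + 6) * numTrivalentGluings (n + 4) 0 =
      (n + 4) * (3 * (n + 3) * (3 * (n + 2) + 2)) * (3 * (n + 2) * (3 * (n + 1) + 1)) *
        (3 * (n + 1) * (3 * n)) * numTrivalentGluings n 0 := by
  have hslice := slicing_recursion (n + 3) 0
  have hleaf₃ := leaf_recursion (n + 2) 2
  have hleaf₂ := leaf_recursion (n + 1) 1
  have hleaf₁ := leaf_recursion n 0
  simp only [add_assoc, Nat.reduceAdd, zero_add, zero_mul, add_zero] at hslice hleaf₃ hleaf₂ hleaf₁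
  rw [← hslice, hleaf₃, hleaf₂, hleaf₁]
  ring

theorem numTrivalentGluings_two_zero : numTrivalentGluings 2 0 = 3 := by
  have hslice := slicing_recursion 1 0
  have hleaf := leaf_recursion 0 2
  rw [numTrivalentGluings_zero_two] at hleaf
  simp only [zero_add, Nat.reduceAdd, Nat.reduceMul] at hslice hleaf
  lia

open Nat in
theorem numTrivalentGluings_formula (k : ℕ) :
    numTrivalentGluings (4 * k + 2) 0 *
        (12 ^ (k + 2) * (2 * k + 1) * (6 * k + 5) * (k + 1)! * (3 * k + 3)!) =
      (6 * k + 6)! * (3 ^ (4 * k + 2) * (4 * k + 2)!) := by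
  induction k with
  | zero => simp [numTrivalentGluings_two_zero, factorial]
  | succ k ih =>
    have hstep := numTrivalentGluings_add_four (4 * k + 2)
    have h6 : (6 * (k + 1) + 6)! = (6 * k + 12) * (6 * k + 11) * (6 * k + 10) * (6 * k + 9) *
        (6 * k + 8) * (6 * k + 7) * (6 * k + 6)! := by
      simp only [mul_add, mul_one, add_assoc, Nat.reduceAdd, factorial_succ]
      ring
    have h4 : (4 * (k + 1) + 2)! =
        (4 * k + 6) * (4 * k + 5) * (4 * k + 4) * (4 * k + 3) * (4 * k + 2)! := by
      simp only [mul_add, mul_one, add_assoc, Nat.reduceAdd, factorial_succ]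
      ring
    have h3 : (3 * (k + 1) + 3)! = (3 * k + 6) * (3 * k + 5) * (3 * k + 4) * (3 * k + 3)! := by
      simp only [mul_add, mul_one, add_assoc, Nat.reduceAdd, factorial_succ]
      ring
    rw [show 4 * (k + 1) + 2 = 4 * k + 2 + 4 by ring] at h4 ⊢
    rw [h6, h4, h3, factorial_succ (k + 1), pow_succ, pow_add 3]
    refine Nat.eq_of_mul_eq_mul_left (Nat.succ_pos (4 * k + 7)) ?_
    zify at ih hstep ⊢
    linear_combination
      ((12 ^ (k + 2) * 12 * (2 * (k + 1) + 1) * (6 * (k + 1) + 5) * ((k + 2) * (k + 1)!) *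
        ((3 * k + 6) * (3 * k + 5) * (3 * k + 4) * (3 * k + 3)!)) : ℤ) * hstep +
      (81 * (4 * k + 8) * (4 * k + 6) * (4 * k + 5) * (4 * k + 4) * (4 * k + 3) * (6 * k + 12) *
        (6 * k + 11) * (6 * k + 10) * (6 * k + 9) * (6 * k + 8) * (6 * k + 7) : ℤ) * ih

/-! ### Counting roots of permutations -/

section Cycles

variable {H : Type*}

/-- The cycles of a permutation, fixed points included. -/
abbrev Cycles (a : Perm H) := Quotient (Perm.SameCycle.setoid a)

/-- A permutation is semiregular if its nontrivial powers have no fixed points. -/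
def Semiregular (a : Perm H) : Prop := ∀ (n : ℕ) (x : H), (a ^ n) x = x → a ^ n = 1

theorem exists_pow_out_eq {a : Perm H} {p : ℕ} (hp : 0 < p) (ha : a ^ p = 1) (x : H) :
    ∃ i : Fin p, (a ^ (i : ℕ)) (⟦x⟧ : Cycles a).out = x := by
  obtain ⟨k, hk⟩ : a.SameCycle (⟦x⟧ : Cycles a).out x :=
    Quotient.mk_out (s := Perm.SameCycle.setoid a) x
  have hmod : 0 ≤ k % p := Int.emod_nonneg k (by lia)
  have hlt : k % p < p := Int.emod_lt_of_pos k (by lia)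
  refine ⟨⟨(k % p).toNat, by lia⟩, ?_⟩
  rw [← zpow_natCast, Int.toNat_of_nonneg hmod, ← zpow_eq_zpow_emod' k ha, hk]

theorem mk_pow_apply (a : Perm H) (n : ℕ) (x : H) : (⟦(a ^ n) x⟧ : Cycles a) = ⟦x⟧ :=
  Quotient.sound (Perm.SameCycle.symm ⟨n, by simp⟩)

theorem semiregular_of_pow_prime_eq_one {a : Perm H} {p : ℕ} (hp : p.Prime) (ha : a ^ p = 1)
    (hfix : ∀ x, a x ≠ x) : Semiregular a := by
  intro n x hx
  have hdvd_p : Function.minimalPeriod a x ∣ p := by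
    refine Function.IsPeriodicPt.minimalPeriod_dvd ?_
    rw [Function.IsPeriodicPt, Function.IsFixedPt, Perm.iterate_eq_pow, ha, Perm.one_apply]
  have hne : Function.minimalPeriod a x ≠ 1 := fun h =>
    hfix x (Function.minimalPeriod_eq_one_iff_isFixedPt.1 h)
  have hdvd_n : p ∣ n := by
    rw [← (hp.eq_one_or_self_of_dvd _ hdvd_p).resolve_left hne]
    refine Function.IsPeriodicPt.minimalPeriod_dvd ?_
    rwa [Function.IsPeriodicPt, Function.IsFixedPt, Perm.iterate_eq_pow]
  exact orderOf_dvd_iff_pow_eq_one.1 ((orderOf_dvd_of_pow_eq_one ha).trans hdvd_n)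

variable [Finite H]

theorem card_le_mul_card_cycles {a : Perm H} {p : ℕ} (hp : 0 < p) (ha : a ^ p = 1) :
    Nat.card H ≤ p * Nat.card (Cycles a) := by
  have hsurj : Function.Surjective fun c : Fin p × Cycles a => (a ^ (c.1 : ℕ)) c.2.out := fun x =>
    (exists_pow_out_eq hp ha x).elim fun i hi => ⟨(i, ⟦x⟧), hi⟩
  simpa using Nat.card_le_card_of_surjective _ hsurj

theorem Semiregular.card_eq {a : Perm H} (ha : Semiregular a) :
    Nat.card H = orderOf a * Nat.card (Cycles a) := by
  refine (card_le_mul_card_cycles (orderOf_pos a) (pow_orderOf_eq_one a)).antisymm ?_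
  have hinj : Function.Injective
      fun c : Fin (orderOf a) × Cycles a => (a ^ (c.1 : ℕ)) c.2.out := by
    rintro ⟨i, c⟩ ⟨j, d⟩ h
    have hcd : c = d := by
      have hmk := congrArg (fun x => (⟦x⟧ : Cycles a)) h
      simpa only [mk_pow_apply, Quotient.out_eq] using hmk
    subst hcd
    have hij : a ^ (i : ℕ) = a ^ (j : ℕ) := by
      wlog hle : j ≤ i generalizing i j
      · exact (this j i h.symm (le_of_not_ge hle)).symm
      have hsub : a ^ (i - j : ℕ) = 1 := ha _ ((a ^ (j : ℕ)) c.out) <| by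
        rwa [← Perm.mul_apply, pow_sub_mul_pow a hle]
      rw [← pow_sub_mul_pow a hle, hsub, one_mul]
    rw [Fin.ext (pow_injOn_Iio_orderOf i.2 j.2 hij)]
  simpa using Nat.card_le_card_of_injective _ hinj

end Cycles

section Roots

variable {H : Type*}

/-- The points other than the chosen representative of their cycle. -/
def nonRepresentatives (t : Perm H) : Set H := {v | (⟦v⟧ : Cycles t).out ≠ v}

theorem eq_of_sameCycle_of_notMem_nonRepresentatives {t : Perm H} {v w : H}
    (hv : v ∉ nonRepresentatives t) (hw : w ∉ nonRepresentatives t) (h : t.SameCycle v w) :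
    v = w := by
  rw [nonRepresentatives, Set.mem_ofPred_eq, not_not] at hv hw
  rw [← hv, ← hw, Quotient.sound (s := Perm.SameCycle.setoid t) h]

theorem exists_notMem_sameCycle_of_eqOn {t t' : Perm H} {S : Set H} (h : Set.EqOn t t' S) {k : ℕ}
    {x : H} (hx : (t ^ k) x ∉ S) : ∃ y ∉ S, t.SameCycle x y ∧ t'.SameCycle x y := by
  induction k generalizing x with
  | zero => exact ⟨x, hx, .refl _ _, .refl _ _⟩
  | succ k ih =>
    by_cases hxS : x ∈ S
    · obtain ⟨y, hy, hty, hty'⟩ := ih (x := t x) (by rwa [← Perm.mul_apply, ← pow_succ])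
      rw [h hxS, Perm.sameCycle_apply_left] at hty'
      exact ⟨y, hy, Perm.sameCycle_apply_left.1 hty, hty'⟩
    · exact ⟨x, hxS, .refl _ _, .refl _ _⟩

variable [Finite H]

/- A cycle follows its non-representatives until it closes up at its representative, so `t` is
determined by where it sends the non-representatives. -/
theorem eq_of_eqOn_nonRepresentatives {t t' : Perm H}
    (hS : nonRepresentatives t = nonRepresentatives t') (h : Set.EqOn t t' (nonRepresentatives t)) :
    t = t' := by
  ext v
  by_cases hv : v ∈ nonRepresentatives t
  · exact h hv
  obtain ⟨w, hw⟩ := t'.surjective (t v)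
  have hwS : w ∉ nonRepresentatives t := fun hwS => hv <| by
    rwa [← t.injective ((h hwS).trans hw)]
  obtain ⟨k, hk⟩ := (Perm.sameCycle_apply_left.2 (.refl t v)).exists_nat_pow_eq
  obtain ⟨y, hy, hty, hty'⟩ := exists_notMem_sameCycle_of_eqOn h (x := t v) (hk ▸ hv)
  have hvy : v = y :=
    eq_of_sameCycle_of_notMem_nonRepresentatives hv hy (Perm.sameCycle_apply_left.1 hty)
  rw [← hw, Perm.sameCycle_apply_left] at hty'
  have hwy : w = y :=
    eq_of_sameCycle_of_notMem_nonRepresentatives (hS ▸ hwS) (hS ▸ hy) hty'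
  rw [← hw, hwy, hvy]

theorem ncard_nonRepresentatives_add_card_cycles (t : Perm H) :
    (nonRepresentatives t).ncard + Nat.card (Cycles t) = Nat.card H := by
  have hcompl : (nonRepresentatives t)ᶜ = Set.range (Quotient.out : Cycles t → H) := by
    ext v
    rw [Set.mem_compl_iff, nonRepresentatives, Set.mem_ofPred_eq, not_not]
    exact ⟨fun h => ⟨_, h⟩, fun ⟨c, hc⟩ => by rw [← hc, Quotient.out_eq]⟩
  rw [← Set.ncard_add_ncard_compl (nonRepresentatives t), hcompl,
    ← Nat.card_coe_set_eq (Set.range _), Nat.card_range_of_injective Quotient.out_injective]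

theorem ncard_setOf_nonRepresentatives_eq_le (S : Set H) :
    {t : Perm H | nonRepresentatives t = S}.ncard ≤ Nat.card H ^ S.ncard := by
  have hinj : Function.Injective
      fun (t : {t : Perm H | nonRepresentatives t = S}) (v : S) => t.1 v := fun t t' h =>
    Subtype.ext <| eq_of_eqOn_nonRepresentatives (t.2.trans t'.2.symm) fun v hv =>
      congrFun h ⟨v, t.2 ▸ hv⟩
  simpa [Nat.card_fun] using Nat.card_le_card_of_injective _ hinj

theorem ncard_nonRepresentatives_le {t : Perm H} {q : ℕ} (hq : 0 < q) (ht : t ^ q = 1) :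
    (nonRepresentatives t).ncard ≤ (q - 1) * Nat.card H / q := by
  have hadd := ncard_nonRepresentatives_add_card_cycles t
  have hmul : q * (nonRepresentatives t).ncard + Nat.card H ≤ q * Nat.card H :=
    (Nat.add_le_add_left (card_le_mul_card_cycles hq ht) _).trans_eq (by rw [← mul_add, hadd])
  rw [Nat.le_div_iff_mul_le hq, Nat.sub_one_mul, mul_comm]
  lia

theorem ncard_roots_with_nonRepresentatives_le {q : ℕ} (hq : 0 < q) (S : Set H) :
    {t : Perm H | t ^ q = 1 ∧ nonRepresentatives t = S}.ncard ≤
      Nat.card H ^ ((q - 1) * Nat.card H / q) := by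
  obtain hempty | ⟨t, htq, rfl⟩ :=
    {t : Perm H | t ^ q = 1 ∧ nonRepresentatives t = S}.eq_empty_or_nonempty
  · simp [hempty]
  refine (Set.ncard_le_ncard fun t' ht' => ht'.2).trans
    ((ncard_setOf_nonRepresentatives_eq_le _).trans ?_)
  rcases Nat.eq_zero_or_pos (Nat.card H) with hH | hH
  · have hadd := ncard_nonRepresentatives_add_card_cycles t
    rw [show (nonRepresentatives t).ncard = 0 by lia, hH, mul_zero, Nat.zero_div]
  · exact Nat.pow_le_pow_right hH (ncard_nonRepresentatives_le hq htq)

theorem ncard_roots_le {q : ℕ} (hq : 0 < q) :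
    {t : Perm H | t ^ q = 1}.ncard ≤
      2 ^ Nat.card H * Nat.card H ^ ((q - 1) * Nat.card H / q) := by
  classical
  have := Fintype.ofFinite H
  have hcard := Finset.card_le_mul_card_image_of_maps_to
    (s := Finset.univ.filter fun t : Perm H => t ^ q = 1) (f := nonRepresentatives)
    (t := Finset.univ) (fun _ _ => Finset.mem_univ _) _ fun S _ => by
      simpa only [Finset.filter_filter, Set.ncard_eq_toFinset_card', Set.toFinset_ofPred]
        using ncard_roots_with_nonRepresentatives_le hq S
  rwa [Finset.card_univ, Fintype.card_set, ← Nat.card_eq_fintype_card, mul_comm,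
    ← Set.toFinset_ofPred, ← Set.ncard_eq_toFinset_card'] at hcard

end Roots

section CommutingRoots

variable {H : Type*} {a w : Perm H}

/-- The permutation of the cycles of `a` induced by a permutation commuting with `a`. -/
def cyclesMap (h : Commute a w) : Perm (Cycles a) :=
  Quotient.congr w fun x y => by
    refine ⟨fun ⟨k, hk⟩ => ⟨k, ?_⟩, fun ⟨k, hk⟩ => ⟨k, w.injective ?_⟩⟩
    · rw [← Perm.mul_apply, (h.zpow_left k).eq, Perm.mul_apply, hk]
    · rwa [← Perm.mul_apply, ← (h.zpow_left k).eq]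

theorem cyclesMap_mk (h : Commute a w) (x : H) : cyclesMap h ⟦x⟧ = ⟦w x⟧ := rfl

theorem cyclesMap_pow_mk (h : Commute a w) (n : ℕ) (x : H) :
    (cyclesMap h ^ n) ⟦x⟧ = ⟦(w ^ n) x⟧ := by
  induction n with
  | zero => rfl
  | succ n ih => rw [pow_succ', Perm.mul_apply, ih, cyclesMap_mk, pow_succ', Perm.mul_apply]

theorem cyclesMap_pow_eq_one (h : Commute a w) {q : ℕ} (hw : w ^ q = 1) : cyclesMap h ^ q = 1 := by
  ext c
  induction c using Quotient.inductionOn with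
  | h x => rw [cyclesMap_pow_mk, hw, Perm.one_apply, Perm.one_apply]

theorem eq_of_apply_out_eq {w' : Perm H} (h : Commute a w) (h' : Commute a w')
    (hout : ∀ c : Cycles a, w c.out = w' c.out) : w = w' := by
  ext x
  obtain ⟨k, hk⟩ : a.SameCycle (⟦x⟧ : Cycles a).out x :=
    Quotient.mk_out (s := Perm.SameCycle.setoid a) x
  rw [← hk, ← Perm.mul_apply, ← Perm.mul_apply, ← (h.zpow_left k).eq, ← (h'.zpow_left k).eq,
    Perm.mul_apply, Perm.mul_apply, hout]

theorem exists_pow_out_cyclesMap_eq {p : ℕ} (hp : 0 < p) (ha : a ^ p = 1) (h : Commute a w)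
    (c : Cycles a) : ∃ i : Fin p, (a ^ (i : ℕ)) (cyclesMap h c).out = w c.out := by
  have hc : cyclesMap h c = ⟦w c.out⟧ := by rw [← cyclesMap_mk h, Quotient.out_eq]
  rw [hc]
  exact exists_pow_out_eq hp ha (w c.out)

variable [Finite H]

theorem ncard_commuting_roots_le {p : ℕ} (hp : 0 < p) (ha : a ^ p = 1) (q : ℕ) :
    {w : Perm H | Commute a w ∧ w ^ q = 1}.ncard ≤
      p ^ Nat.card (Cycles a) * {t : Perm (Cycles a) | t ^ q = 1}.ncard := by
  choose shift hshift using fun (w : {w : Perm H | Commute a w ∧ w ^ q = 1}) =>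
    exists_pow_out_cyclesMap_eq hp ha w.2.1
  have hinj : Function.Injective fun w : {w : Perm H | Commute a w ∧ w ^ q = 1} =>
      (shift w, (⟨cyclesMap w.2.1, cyclesMap_pow_eq_one w.2.1 w.2.2⟩ :
        {t : Perm (Cycles a) | t ^ q = 1})) := fun w w' h => by
    simp only [Prod.mk.injEq, Subtype.mk.injEq] at h
    refine Subtype.ext (eq_of_apply_out_eq w.2.1 w'.2.1 fun c => ?_)
    rw [← hshift w, ← hshift w', h.1, h.2]
  simpa only [Nat.card_prod, Nat.card_fun, Nat.card_fin, Nat.card_coe_set_eq] using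
    Nat.card_le_card_of_injective _ hinj

theorem ncard_commuting_roots_le_mul_pow {p q : ℕ} (hp : 0 < p) (ha : a ^ p = 1) (hq : 0 < q) :
    {w : Perm H | Commute a w ∧ w ^ q = 1}.ncard ≤
      (2 * p) ^ Nat.card (Cycles a) * Nat.card H ^ ((q - 1) * Nat.card (Cycles a) / q) := by
  refine (ncard_commuting_roots_le hp ha q).trans ?_
  rw [mul_comm 2, mul_pow, mul_assoc]
  gcongr
  refine (ncard_roots_le hq).trans ?_
  gcongr
  exact Nat.card_le_card_of_surjective _ Quotient.mk_surjective

end CommutingRoots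

/-! ### Isomorphism classes of gluings -/

section Isomorphism

variable {H : Type*} {σ τ α : Perm H}

theorem IsPairing.sq_eq_one (hα : IsPairing α) : α ^ 2 = 1 :=
  Equiv.ext fun x => by rw [sq, Perm.mul_apply, (hα x).1, Perm.one_apply]

theorem IsGluing.conj (hα : IsGluing σ α) (h : Commute σ τ) : IsGluing σ (τ * α * τ⁻¹) :=
  (isGluing_permCongr_iff τ fun x => by rw [← Perm.mul_apply, ← h.eq, Perm.mul_apply]).2 hα

theorem IsGluing.semiregular (hα : IsGluing σ α) (hσ : Commute σ τ) (hτ : Commute τ α) :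
    Semiregular τ := by
  intro n x hx
  ext y
  obtain ⟨k, rfl⟩ := hα.2 x y
  have hcomm : Commute (τ ^ n) ((σ * α) ^ k) :=
    ((hσ.symm.mul_right hτ).pow_left n).zpow_right k
  rw [← Perm.mul_apply, hcomm.eq, Perm.mul_apply, hx, Perm.one_apply]

variable (σ) in
/-- Isomorphisms of ribbon graphs: the centralizer of the vertex rotation acts on the gluings by
conjugation. -/
instance gluingAction :
    MulAction (Subgroup.centralizer ({σ} : Set (Perm H))) {α : Perm H // IsGluing σ α} where
  smul τ α := ⟨τ.1 * α.1 * τ.1⁻¹,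
    α.2.conj (Subgroup.mem_centralizer_singleton_iff.1 τ.2).symm⟩
  one_smul α := Subtype.ext (by
    change (1 : Perm H) * α.1 * 1⁻¹ = α.1
    rw [one_mul, inv_one, mul_one])
  mul_smul τ τ' α := Subtype.ext (by
    change τ.1 * τ'.1 * α.1 * (τ.1 * τ'.1)⁻¹ = τ.1 * (τ'.1 * α.1 * τ'.1⁻¹) * τ.1⁻¹
    group)

theorem commute_of_mem_fixedBy {τ : Subgroup.centralizer ({σ} : Set (Perm H))}
    {α : {α : Perm H // IsGluing σ α}} (h : α ∈ MulAction.fixedBy _ τ) : Commute τ.1 α.1 :=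
  eq_mul_of_mul_inv_eq (congrArg Subtype.val (MulAction.mem_fixedBy.1 h))

theorem semiregular_of_fixedBy_nonempty {τ : Subgroup.centralizer ({σ} : Set (Perm H))}
    (h : (MulAction.fixedBy {α : Perm H // IsGluing σ α} τ).Nonempty) : Semiregular τ.1 :=
  h.elim fun α hα => α.2.semiregular (Subgroup.mem_centralizer_singleton_iff.1 τ.2).symm
    (commute_of_mem_fixedBy hα)

/-- The number of isomorphism classes of gluings with vertex rotation `σ`. -/
noncomputable def numGluingClasses (σ : Perm H) : ℕ :=
  Nat.card (MulAction.orbitRel.Quotient (Subgroup.centralizer ({σ} : Set (Perm H)))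
    {α : Perm H // IsGluing σ α})

/-- A common bound, over the possible orders, for the number of pairs of an automorphism of that
order and a gluing it fixes. -/
noncomputable def symmetricPairBound (σ : Perm H) : ℕ :=
  (2 * orderOf σ) ^ Nat.card (Cycles σ) * 2 ^ Nat.card H *
    Nat.card H ^ ((orderOf σ + 2) * Nat.card (Cycles σ) / 4)

variable [Finite H]

theorem card_fixedBy_le (τ : Subgroup.centralizer ({σ} : Set (Perm H))) :
    Nat.card (MulAction.fixedBy {α : Perm H // IsGluing σ α} τ) ≤
      (2 * orderOf τ) ^ (Nat.card H / orderOf τ) *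
        Nat.card H ^ (Nat.card H / orderOf τ / 2) := by
  obtain hempty | hne := (MulAction.fixedBy {α : Perm H // IsGluing σ α} τ).eq_empty_or_nonempty
  · simp [hempty]
  have hpos : 0 < orderOf τ.1 := orderOf_pos τ.1
  have hcycles : Nat.card H / orderOf τ.1 = Nat.card (Cycles τ.1) := by
    rw [(semiregular_of_fixedBy_nonempty hne).card_eq, Nat.mul_div_cancel_left _ hpos]
  have hinj : Function.Injective
      fun α : MulAction.fixedBy {α : Perm H // IsGluing σ α} τ =>
        (⟨α.1.1, commute_of_mem_fixedBy α.2, α.1.2.1.sq_eq_one⟩ :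
          {w : Perm H | Commute τ.1 w ∧ w ^ 2 = 1}) := fun α β h =>
    Subtype.ext (Subtype.ext (by simpa only [Subtype.mk.injEq] using h))
  have hcard := Nat.card_le_card_of_injective _ hinj
  rw [← Subgroup.orderOf_coe, hcycles]
  simpa using hcard.trans
    (ncard_commuting_roots_le_mul_pow hpos (pow_orderOf_eq_one τ.1) two_pos)

theorem card_centralizer_orderOf_eq_le {q : ℕ} (hq : 0 < q) :
    Nat.card {τ : Subgroup.centralizer ({σ} : Set (Perm H)) // orderOf τ = q} ≤
      (2 * orderOf σ) ^ Nat.card (Cycles σ) *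
        Nat.card H ^ ((q - 1) * Nat.card (Cycles σ) / q) := by
  have hinj : Function.Injective
      fun τ : {τ : Subgroup.centralizer ({σ} : Set (Perm H)) // orderOf τ = q} =>
        (⟨τ.1.1, (Subgroup.mem_centralizer_singleton_iff.1 τ.1.2).symm,
          orderOf_dvd_iff_pow_eq_one.1 (by rw [Subgroup.orderOf_coe, τ.2])⟩ :
          {w : Perm H | Commute σ w ∧ w ^ q = 1}) := fun τ τ' h =>
    Subtype.ext (Subtype.ext (by simpa only [Subtype.mk.injEq] using h))
  exact (Nat.card_le_card_of_injective _ hinj).trans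
    (ncard_commuting_roots_le_mul_pow (orderOf_pos σ) (pow_orderOf_eq_one σ) hq)

theorem sub_one_mul_div_add_mul_div_le {p m q : ℕ} (hp : 2 ≤ p) (hq : 2 ≤ q) :
    (q - 1) * m / q + p * m / q / 2 ≤ (p + 2) * m / 4 := by
  obtain ⟨r, rfl⟩ := Nat.exists_eq_add_of_le hp
  obtain ⟨s, rfl⟩ := Nat.exists_eq_add_of_le hq
  have hA : (s + 1) * m / (2 + s) * (2 + s) ≤ (s + 1) * m := Nat.div_mul_le_self _ _
  have hB : (2 + r) * m / (2 + s) / 2 * 2 * (2 + s) ≤ (2 + r) * m :=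
    (Nat.mul_le_mul_right _ (Nat.div_mul_le_self _ _)).trans (Nat.div_mul_le_self _ _)
  rw [show 2 + s - 1 = s + 1 by lia, Nat.le_div_iff_mul_le (by lia)]
  refine Nat.le_of_mul_le_mul_right ?_ (show 0 < 2 + s by lia)
  nlinarith [Nat.zero_le (r * s * m)]

theorem card_centralizer_mul_card_fixedBy_le (hσ : Semiregular σ) (hp : 2 ≤ orderOf σ)
    {q : ℕ} (hq : 2 ≤ q) (hH : 0 < Nat.card H) :
    (2 * orderOf σ) ^ Nat.card (Cycles σ) *
        Nat.card H ^ ((q - 1) * Nat.card (Cycles σ) / q) *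
      ((2 * q) ^ (Nat.card H / q) * Nat.card H ^ (Nat.card H / q / 2)) ≤ symmetricPairBound σ := by
  have hpow : (2 * q) ^ (Nat.card H / q) ≤ 2 ^ Nat.card H :=
    calc (2 * q) ^ (Nat.card H / q) ≤ (2 ^ q) ^ (Nat.card H / q) := by
          gcongr
          exact Nat.mul_le_pow (by lia) q
      _ ≤ 2 ^ Nat.card H := by
          rw [← pow_mul]
          exact Nat.pow_le_pow_right two_pos (Nat.mul_div_le _ _)
  have hexp := sub_one_mul_div_add_mul_div_le (m := Nat.card (Cycles σ)) hp hq
  rw [← hσ.card_eq] at hexp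
  rw [symmetricPairBound, mul_mul_mul_comm, ← pow_add]
  gcongr

theorem sum_card_fixedBy_orderOf_eq_le [Fintype (Subgroup.centralizer ({σ} : Set (Perm H)))]
    (hσ : Semiregular σ) (hp : 2 ≤ orderOf σ) {q : ℕ} (hq : 2 ≤ q) (hH : 0 < Nat.card H) :
    ∑ τ : Subgroup.centralizer ({σ} : Set (Perm H)) with orderOf τ = q,
      Nat.card (MulAction.fixedBy {α : Perm H // IsGluing σ α} τ) ≤ symmetricPairBound σ := by
  refine (Finset.sum_le_card_nsmul _ _ _ fun τ hτ => ?_).trans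
    ((Nat.mul_le_mul_right _ ?_).trans (card_centralizer_mul_card_fixedBy_le hσ hp hq hH))
  · rw [← (Finset.mem_filter.1 hτ).2]
    exact card_fixedBy_le τ
  · rw [← Fintype.card_subtype, ← Nat.card_eq_fintype_card]
    exact card_centralizer_orderOf_eq_le (by lia)

theorem sum_card_fixedBy_ne_one_le [Fintype (Subgroup.centralizer ({σ} : Set (Perm H)))]
    [DecidableEq (Subgroup.centralizer ({σ} : Set (Perm H)))] (hσ : Semiregular σ)
    (hp : 2 ≤ orderOf σ) (hH : 0 < Nat.card H) :
    ∑ τ ∈ (Finset.univ : Finset (Subgroup.centralizer ({σ} : Set (Perm H)))).erase 1,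
      Nat.card (MulAction.fixedBy {α : Perm H // IsGluing σ α} τ) ≤
      Nat.card H * symmetricPairBound σ := by
  have horder (τ : Subgroup.centralizer ({σ} : Set (Perm H))) (hτ : τ ≠ 1)
      (hfix : Nat.card (MulAction.fixedBy {α : Perm H // IsGluing σ α} τ) ≠ 0) :
      orderOf τ ∈ Finset.Icc 2 (Nat.card H) := by
    have hne := (Nat.card_pos_iff.1 (Nat.pos_of_ne_zero hfix)).1
    have hdvd : orderOf τ ∣ Nat.card H := by
      rw [← Subgroup.orderOf_coe]
      exact ⟨_, (semiregular_of_fixedBy_nonempty (Set.nonempty_coe_sort.1 hne)).card_eq⟩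
    have hpos := orderOf_pos τ
    have hne_one : orderOf τ ≠ 1 := fun h => hτ (orderOf_eq_one_iff.1 h)
    exact Finset.mem_Icc.2 ⟨by lia, Nat.le_of_dvd hH hdvd⟩
  rw [← Finset.sum_filter_ne_zero, ← Finset.sum_fiberwise_of_maps_to (g := orderOf)
    (t := Finset.Icc 2 (Nat.card H)) fun τ hτ => by
      obtain ⟨hτ, hfix⟩ := Finset.mem_filter.1 hτ
      exact horder τ (Finset.ne_of_mem_erase hτ) hfix]
  refine (Finset.sum_le_card_nsmul _ _ (symmetricPairBound σ) fun q hq => ?_).trans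
    (Nat.mul_le_mul_right _ (by rw [Nat.card_Icc]; lia))
  refine le_trans (Finset.sum_le_sum_of_subset fun τ hτ => ?_)
    (sum_card_fixedBy_orderOf_eq_le hσ hp (Finset.mem_Icc.1 hq).1 hH)
  exact Finset.mem_filter.2 ⟨Finset.mem_univ _, (Finset.mem_filter.1 hτ).2⟩

theorem numGluingClasses_mul_card_centralizer_bounds (hσ : Semiregular σ) (hp : 2 ≤ orderOf σ)
    (hH : 0 < Nat.card H) :
    numGluingClasses σ * Nat.card (Subgroup.centralizer ({σ} : Set (Perm H))) ∈
      Set.Icc (numGluings σ) (numGluings σ + Nat.card H * symmetricPairBound σ) := by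
  classical
  have := Fintype.ofFinite (Subgroup.centralizer ({σ} : Set (Perm H)))
  have := Fintype.ofFinite {α : Perm H // IsGluing σ α}
  have hburnside := MulAction.sum_card_fixedBy_eq_card_orbits_mul_card_group
    (Subgroup.centralizer ({σ} : Set (Perm H))) {α : Perm H // IsGluing σ α}
  simp only [← Nat.card_eq_fintype_card] at hburnside
  have hone : Nat.card (MulAction.fixedBy {α : Perm H // IsGluing σ α}
      (1 : Subgroup.centralizer ({σ} : Set (Perm H)))) = numGluings σ := by
    rw [MulAction.fixedBy_one_eq_univ, Nat.card_univ]
    rfl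
  have hsum := sum_card_fixedBy_ne_one_le hσ hp hH
  rw [numGluingClasses, ← hburnside, ← Finset.add_sum_erase _ _ (Finset.mem_univ 1), hone]
  exact ⟨Nat.le_add_right _ _, Nat.add_le_add_left hsum _⟩

end Isomorphism

/-! ### One-vertex triangulations -/

section Triangulation

theorem val_rho {N : ℕ} (a : Fin (3 * N)) : (rho N a : ℕ) = 3 * (a / 3) + (a + 1) % 3 := rfl

theorem rho_apply_ne {N : ℕ} (a : Fin (3 * N)) : rho N a ≠ a := by
  rw [ne_eq, Fin.ext_iff, val_rho]
  lia

theorem rho_pow_three (N : ℕ) : rho N ^ 3 = 1 := by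
  ext a
  simp only [pow_succ, pow_zero, one_mul, Perm.mul_apply, val_rho, Perm.one_apply]
  lia

theorem semiregular_rho (N : ℕ) : Semiregular (rho N) :=
  semiregular_of_pow_prime_eq_one Nat.prime_three (rho_pow_three N) rho_apply_ne

theorem orderOf_rho {N : ℕ} (hN : 0 < N) : orderOf (rho N) = 3 :=
  orderOf_eq_prime (rho_pow_three N) fun h =>
    rho_apply_ne (⟨0, by lia⟩ : Fin (3 * N)) (by rw [h, Perm.one_apply])

theorem card_cycles_rho {N : ℕ} (hN : 0 < N) : Nat.card (Cycles (rho N)) = N := by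
  have hcard := (semiregular_rho N).card_eq
  rw [orderOf_rho hN, Nat.card_fin] at hcard
  lia

theorem numGluings_rho (N : ℕ) : numGluings (rho N) = numTrivalentGluings N 0 := by
  refine numGluings_congr ((Equiv.sumEmpty (Fin N × Fin 3) (Fin 0)).trans
    (finProdFinEquiv.trans (finCongr (mul_comm N 3)))) ?_
  rintro (⟨v, i⟩ | x)
  · have hrot : (finRotate 3 i : ℕ) = (i + 1) % 3 := by fin_cases i <;> rfl
    ext
    rw [val_rho]
    change (finRotate 3 i : ℕ) + 3 * v = 3 * ((i + 3 * v) / 3) + (i + 3 * v + 1) % 3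
    lia
  · exact x.elim0

theorem cycleType_rho (N : ℕ) : (rho N).cycleType = Multiset.replicate N 3 := by
  have : Fact (Nat.Prime 3) := ⟨Nat.prime_three⟩
  have hreplicate := Perm.cycleType_of_pow_prime_eq_one (rho_pow_three N)
  have hsupport : (rho N).support = Finset.univ :=
    Finset.eq_univ_of_forall fun a => Perm.mem_support.2 (rho_apply_ne a)
  have hsum := Perm.sum_cycleType (rho N)
  rw [hsupport, Finset.card_univ, Fintype.card_fin, hreplicate, Multiset.sum_replicate,
    smul_eq_mul] at hsum
  rwa [show (rho N).cycleType.card = N by lia] at hreplicate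

theorem card_centralizer_rho {N : ℕ} (hN : 0 < N) :
    Nat.card (Subgroup.centralizer ({rho N} : Set (Perm (Fin (3 * N))))) = 3 ^ N * N.factorial := by
  rw [Perm.nat_card_centralizer, cycleType_rho, Multiset.sum_replicate, Multiset.prod_replicate,
    Multiset.toFinset_replicate, if_neg hN.ne', Finset.prod_singleton,
    Multiset.count_replicate_self, Fintype.card_fin, smul_eq_mul, mul_comm 3 N, Nat.sub_self,
    Nat.factorial_zero, one_mul]

theorem oneOrbit_iff {N : ℕ} (ω : Omega N) : OneOrbit ω ↔ IsGluing (rho N) ω.1 := by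
  have hconj : SingleOrbit (ω.1 * rho N) ↔ SingleOrbit (rho N * ω.1) :=
    singleOrbit_iff_of_semiconj (rho N) fun _ => rfl
  exact ⟨fun h => ⟨ω.2, hconj.1 h⟩, fun h => hconj.2 h.2⟩

theorem Ig1_eq_numGluingClasses (g : ℕ) : Ig1 g = numGluingClasses (rho (4 * g - 2)) := by
  refine Nat.card_congr (Quot.congr ⟨fun t => ⟨t.1.1, (oneOrbit_iff t.1).1 t.2⟩,
    fun α => ⟨⟨α.1, α.2.1⟩, (oneOrbit_iff ⟨α.1, α.2.1⟩).2 α.2⟩, fun _ => rfl, fun _ => rfl⟩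
    fun t t' => ⟨fun ⟨τ, hτ, hconj⟩ => ?_, fun h => ?_⟩)
  · refine (MulAction.orbitRel _ _).symm ?_
    exact ⟨⟨τ, Subgroup.mem_centralizer_singleton_iff.2 hτ⟩, Subtype.ext hconj⟩
  · obtain ⟨τ, hτ⟩ := (MulAction.orbitRel _ _).symm h
    exact ⟨τ.1, Subgroup.mem_centralizer_singleton_iff.1 τ.2, congrArg Subtype.val hτ⟩

theorem Ig1_mul_mem_Icc {g : ℕ} (hg : 0 < g) :
    Ig1 g * (3 ^ (4 * g - 2) * (4 * g - 2).factorial) ∈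
      Set.Icc (numTrivalentGluings (4 * g - 2) 0) (numTrivalentGluings (4 * g - 2) 0 +
        (12 * g - 6) * (6 ^ (4 * g - 2) * 2 ^ (12 * g - 6) * (12 * g - 6) ^ (5 * g - 3))) := by
  have hN : 0 < 4 * g - 2 := by lia
  have hbounds := numGluingClasses_mul_card_centralizer_bounds (semiregular_rho (4 * g - 2))
    (by rw [orderOf_rho hN]; lia) (by rw [Nat.card_fin]; lia)
  rw [symmetricPairBound, card_centralizer_rho hN, numGluings_rho, card_cycles_rho hN,
    orderOf_rho hN, Nat.card_fin, ← Ig1_eq_numGluingClasses] at hbounds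
  rwa [show 3 * (4 * g - 2) = 12 * g - 6 by lia, show (3 + 2) * (4 * g - 2) / 4 = 5 * g - 3 by lia]
    at hbounds

end Triangulation

/-! ### Asymptotics -/

section Asymptotics

open Asymptotics

/-- The number of gluings of `4g - 2` triangles into a one-vertex triangulation, divided by the
order `3 ^ (4g - 2) * (4g - 2)!` of the group of relabellings. -/
noncomputable def mainTerm (g : ℕ) : ℝ :=
  (6 * g).factorial /
    (12 ^ (g + 1) * (2 * g - 1) * (6 * g - 1) * g.factorial * (3 * g).factorial)

/-- A bound for the contribution of the triangulations with symmetries to `Ig1 g`. -/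
noncomputable def errorTerm (g : ℕ) : ℝ :=
  2 ^ (16 * g) * (12 * g) ^ (5 * g) / (4 * g).factorial

theorem mainTerm_pos {g : ℕ} (hg : 0 < g) : 0 < mainTerm g := by
  have h : (1 : ℝ) ≤ g := mod_cast hg
  have h2 : (0 : ℝ) < 2 * g - 1 := by linarith
  have h6 : (0 : ℝ) < 6 * g - 1 := by linarith
  unfold mainTerm
  positivity

theorem numTrivalentGluings_eq_mainTerm_mul {g : ℕ} (hg : 0 < g) :
    (numTrivalentGluings (4 * g - 2) 0 : ℝ) =
      mainTerm g * (3 ^ (4 * g - 2) * (4 * g - 2).factorial) := by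
  obtain ⟨k, rfl⟩ := Nat.exists_eq_add_one_of_ne_zero hg.ne'
  have hformula := numTrivalentGluings_formula k
  rify at hformula
  rw [show 4 * (k + 1) - 2 = 4 * k + 2 by lia, mainTerm, div_mul_eq_mul_div, mul_add_one 6,
    mul_add_one 3, ← hformula, eq_div_iff]
  · push_cast
    ring
  · have h2 : (0 : ℝ) < 2 * (k + 1 : ℕ) - 1 := by push_cast; linarith [k.cast_nonneg (α := ℝ)]
    have h6 : (0 : ℝ) < 6 * (k + 1 : ℕ) - 1 := by linarith
    positivity

theorem symmetric_bound_mul_factorial_le {g : ℕ} (hg : 0 < g) :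
    (12 * g - 6) * (6 ^ (4 * g - 2) * 2 ^ (12 * g - 6) * (12 * g - 6) ^ (5 * g - 3)) *
        (4 * g).factorial ≤
      2 ^ (16 * g) * (12 * g) ^ (5 * g) * (3 ^ (4 * g - 2) * (4 * g - 2).factorial) := by
  have hfactorial : (4 * g).factorial ≤ (12 * g) ^ 2 * (4 * g - 2).factorial := by
    obtain ⟨k, hk⟩ : ∃ k, 4 * g = k + 2 := ⟨4 * g - 2, by lia⟩
    rw [show 12 * g = 3 * (k + 2) by lia, hk, Nat.add_sub_cancel, Nat.factorial_succ,
      Nat.factorial_succ, ← mul_assoc]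
    gcongr
    nlinarith
  calc (12 * g - 6) * (6 ^ (4 * g - 2) * 2 ^ (12 * g - 6) * (12 * g - 6) ^ (5 * g - 3)) *
        (4 * g).factorial
      = 2 ^ (4 * g - 2 + (12 * g - 6)) * (12 * g - 6) ^ (5 * g - 3 + 1) *
          (3 ^ (4 * g - 2) * (4 * g).factorial) := by
        rw [show 6 = 2 * 3 by rfl, mul_pow, pow_add, pow_succ]
        ring
    _ ≤ 2 ^ (16 * g) * (12 * g) ^ (5 * g - 3 + 1) *
          (3 ^ (4 * g - 2) * ((12 * g) ^ 2 * (4 * g - 2).factorial)) := by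
        gcongr <;> lia
    _ = 2 ^ (16 * g) * (12 * g) ^ (5 * g - 3 + 1 + 2) *
          (3 ^ (4 * g - 2) * (4 * g - 2).factorial) := by ring
    _ = _ := by rw [show 5 * g - 3 + 1 + 2 = 5 * g by lia]

theorem Ig1_mem_Icc_mainTerm {g : ℕ} (hg : 0 < g) :
    (Ig1 g : ℝ) ∈ Set.Icc (mainTerm g) (mainTerm g + errorTerm g) := by
  have hpos : (0 : ℝ) < 3 ^ (4 * g - 2) * (4 * g - 2).factorial := by positivity
  obtain ⟨hlower, hupper⟩ := Ig1_mul_mem_Icc hg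
  have herror := symmetric_bound_mul_factorial_le hg
  rify at hlower hupper herror
  rw [numTrivalentGluings_eq_mainTerm_mul hg] at hlower hupper
  rw [← le_div_iff₀ (by positivity), mul_div_right_comm] at herror
  refine ⟨le_of_mul_le_mul_right hlower hpos, le_of_mul_le_mul_right ?_ hpos⟩
  rw [add_mul, errorTerm]
  exact hupper.trans (by gcongr)

theorem pow_self_le_three_pow_mul_factorial (n k : ℕ) :
    (n : ℝ) ^ k ≤ 3 ^ n * k.factorial := by
  rw [← div_le_iff₀ (by positivity)]
  calc (n : ℝ) ^ k / k.factorial ≤ exp n := Real.pow_div_factorial_le_exp _ n.cast_nonneg k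
    _ = exp 1 ^ n := by rw [← Real.exp_nat_mul, mul_one]
    _ ≤ 3 ^ n := by gcongr; exact Real.exp_one_lt_three.le

theorem errorTerm_le (g : ℕ) :
    errorTerm g ≤ (2 ^ 16 * 12 ^ 5 * 3) ^ g * g ^ g := by
  rw [errorTerm, div_le_iff₀ (by positivity)]
  calc (2 : ℝ) ^ (16 * g) * (12 * g) ^ (5 * g)
      = (2 ^ 16 * 12 ^ 5) ^ g * g ^ g * g ^ (4 * g) := by
        rw [mul_pow, mul_pow, ← pow_mul, ← pow_mul]; ring
    _ ≤ (2 ^ 16 * 12 ^ 5) ^ g * g ^ g * (3 ^ g * (4 * g).factorial) := by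
        gcongr
        exact pow_self_le_three_pow_mul_factorial g (4 * g)
    _ = _ := by rw [mul_pow _ (3 : ℝ)]; ring

theorem pow_div_le_mainTerm {g : ℕ} (hg : 0 < g) :
    (g : ℝ) ^ (2 * g) / (144 * g ^ 2 * 972 ^ g) ≤ mainTerm g := by
  have hone : (1 : ℝ) ≤ g := mod_cast hg
  have h2 : (0 : ℝ) < 2 * g - 1 := by linarith
  have h6 : (0 : ℝ) < 6 * g - 1 := by linarith
  have hfac (n : ℕ) : (n.factorial : ℝ) ≤ (n : ℝ) ^ n := mod_cast n.factorial_le_pow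
  rw [mainTerm, div_le_div_iff₀ (by positivity) (by positivity)]
  calc (g : ℝ) ^ (2 * g) *
        (12 ^ (g + 1) * (2 * g - 1) * (6 * g - 1) * g.factorial * (3 * g).factorial)
      ≤ (g : ℝ) ^ (2 * g) *
        (12 ^ (g + 1) * (2 * g) * (6 * g) * g ^ g * ((3 * g : ℕ) : ℝ) ^ (3 * g)) := by
        gcongr
        · linarith
        · linarith
        · exact hfac g
        · exact hfac (3 * g)
    _ = g ^ (6 * g) * (144 * g ^ 2 * 324 ^ g) := by
        rw [show (324 : ℝ) = 12 * 3 ^ 3 by norm_num]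
        push_cast
        rw [mul_pow, mul_pow (12 : ℝ), ← pow_mul]
        ring
    _ ≤ 3 ^ g * (6 * g).factorial * (144 * g ^ 2 * 324 ^ g) := by
        gcongr
        exact pow_self_le_three_pow_mul_factorial g (6 * g)
    _ = _ := by
        rw [show (972 : ℝ) = 3 * 324 by norm_num, mul_pow]
        ring

theorem errorTerm_isLittleO_mainTerm : errorTerm =o[atTop] mainTerm := by
  set C : ℝ := 2 ^ 16 * 12 ^ 5 * 3 * 4 * 972
  have hzero : Tendsto (fun g : ℕ => 144 * (C ^ g / g.factorial)) atTop (𝓝 0) := by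
    simpa using (FloorSemiring.tendsto_pow_div_factorial_atTop C).const_mul 144
  have hpos : ∀ᶠ g in atTop, 0 < mainTerm g :=
    (eventually_gt_atTop 0).mono fun g => mainTerm_pos
  refine (isLittleO_iff_tendsto' (hpos.mono fun g hg h => absurd h hg.ne')).2
    (squeeze_zero' (hpos.mono fun g hg => ?_) ?_ hzero)
  · rw [errorTerm]
    positivity
  filter_upwards [eventually_gt_atTop 0] with g hg
  have hsq : (g : ℝ) ^ 2 ≤ 4 ^ g := by
    rw [show (4 : ℝ) = 2 ^ 2 by norm_num, ← pow_mul, mul_comm, pow_mul]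
    gcongr
    exact_mod_cast g.lt_two_pow_self.le
  have hfac : (g.factorial : ℝ) ≤ g ^ g := mod_cast g.factorial_le_pow
  have : (0 : ℝ) < g := mod_cast hg
  calc errorTerm g / mainTerm g
      ≤ (2 ^ 16 * 12 ^ 5 * 3) ^ g * g ^ g / (g ^ (2 * g) / (144 * g ^ 2 * 972 ^ g)) := by
        gcongr
        · exact errorTerm_le g
        · exact pow_div_le_mainTerm hg
    _ = 144 * ((2 ^ 16 * 12 ^ 5 * 3) ^ g * g ^ 2 * 972 ^ g / g ^ g) := by
        field_simp
        ring
    _ ≤ 144 * ((2 ^ 16 * 12 ^ 5 * 3) ^ g * 4 ^ g * 972 ^ g / g.factorial) := by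
        gcongr
    _ = 144 * (C ^ g / g.factorial) := by rw [← mul_pow, ← mul_pow]

theorem Ig1_isEquivalent_mainTerm : (fun g => (Ig1 g : ℝ)) ~[atTop] mainTerm := by
  refine (IsBigO.of_bound 1 ?_).trans_isLittleO errorTerm_isLittleO_mainTerm
  filter_upwards [eventually_gt_atTop 0] with g hg
  obtain ⟨hlower, hupper⟩ := Ig1_mem_Icc_mainTerm hg
  rw [Pi.sub_apply, one_mul, Real.norm_of_nonneg (sub_nonneg.2 hlower)]
  exact (sub_le_iff_le_add'.2 hupper).trans (le_abs_self _)

theorem isEquivalent_mul_natCast_sub {c : ℝ} (hc : c ≠ 0) (d : ℝ) :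
    (fun n : ℕ => c * n - d) ~[atTop] fun n => c * n := by
  have hd : (fun _ : ℕ => d) =o[atTop] fun n : ℕ => c * (n : ℝ) :=
    (isLittleO_const_id_atTop d).natCast_atTop.const_mul_right hc
  exact IsEquivalent.refl.sub_isLittleO hd

theorem factorial_mul_isEquivalent {c : ℕ} (hc : 0 < c) :
    (fun n : ℕ => ((c * n).factorial : ℝ)) ~[atTop]
      fun n => √(2 * c * n * π) * (c * n / exp 1) ^ (c * n) := by
  refine (Stirling.factorial_isEquivalent_stirling.comp_tendsto
    (tendsto_id.const_mul_atTop' hc)).congr_right (.of_forall fun n => ?_)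
  simp [mul_assoc]

theorem mainTerm_isEquivalent :
    mainTerm ~[atTop] fun g => (12 * g / exp 1) ^ (2 * g) / (144 * g ^ 2 * √(π * g)) := by
  have htwelve : (fun g : ℕ => (12 : ℝ) ^ (g + 1)) ~[atTop] fun g => 12 ^ (g + 1) := .refl
  have hone : (fun g : ℕ => (g.factorial : ℝ)) ~[atTop]
      fun g => √(2 * g * π) * (g / exp 1) ^ g := Stirling.factorial_isEquivalent_stirling
  refine ((factorial_mul_isEquivalent (c := 6) (by simp)).div <|
    (((htwelve.mul (isEquivalent_mul_natCast_sub two_ne_zero 1)).mul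
      (isEquivalent_mul_natCast_sub (c := 6) (by simp) 1)).mul hone).mul
        (factorial_mul_isEquivalent (c := 3) (by simp))).congr_right ?_
  filter_upwards [eventually_gt_atTop 0] with g hg
  have : (0 : ℝ) < g := mod_cast hg
  have hsqrt : √(2 * g * π) * √(2 * 3 * g * π) = √(2 * 6 * g * π) * √(π * g) := by
    rw [← Real.sqrt_mul (by positivity), ← Real.sqrt_mul (by positivity)]
    ring_nf
  have hpow (x : ℝ) :
      (6 * x) ^ (6 * g) = 12 ^ g * x ^ g * (3 * x) ^ (3 * g) * (12 * x) ^ (2 * g) := by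
    simp only [pow_mul, ← mul_pow]
    congr 1
    ring
  simp only [Pi.div_apply, Pi.mul_apply, Nat.cast_ofNat, mul_div_assoc _ (g : ℝ) (exp 1), hpow]
  rw [div_eq_div_iff (by positivity) (by positivity)]
  linear_combination (-144 * g ^ 2 * 12 ^ g * (g / exp 1) ^ g * (3 * (g / exp 1)) ^ (3 * g) *
    (12 * (g / exp 1)) ^ (2 * g)) * hsqrt

theorem tendsto_one_sub_one_div_pow :
    Tendsto (fun g : ℕ => (1 - 1 / (2 * g) : ℝ) ^ (2 * g)) atTop (𝓝 (exp (-1))) := by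
  refine ((Real.tendsto_one_add_div_pow_exp (-1)).comp
    (tendsto_id.const_mul_atTop' two_pos)).congr fun g => ?_
  simp [neg_div, ← sub_eq_add_neg]

theorem rpow_two_mul_sub_one_isEquivalent :
    (fun g : ℕ => ((12 * g - 6) / exp 1) ^ (2 * g - 1 : ℝ)) ~[atTop]
      fun g => (12 * g / exp 1) ^ (2 * g) / (12 * g) := by
  have hexp : (fun g : ℕ => (1 - 1 / (2 * g) : ℝ) ^ (2 * g)) ~[atTop] fun _ => exp (-1) :=
    (isEquivalent_const_iff_tendsto (exp_ne_zero _)).2 tendsto_one_sub_one_div_pow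
  have hpow : (fun g : ℕ => (12 * g / exp 1) ^ (2 * g)) ~[atTop]
      fun g => (12 * g / exp 1) ^ (2 * g) := .refl
  have hconst : (fun _ : ℕ => exp 1) ~[atTop] fun _ => exp 1 := .refl
  refine (((hpow.mul hexp).mul hconst).div
    (isEquivalent_mul_natCast_sub (c := 12) (by simp) 6)).congr_left ?_ |>.congr_right ?_
  · filter_upwards [eventually_gt_atTop 0] with g hg
    have hone : (1 : ℝ) ≤ g := mod_cast hg
    have hbase : (0 : ℝ) < 12 * g - 6 := by linarith
    have hsplit : (12 * g / exp 1) * (1 - 1 / (2 * g)) = (12 * g - 6) / exp 1 := by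
      field_simp
      ring
    have hexponent : (2 * g : ℝ) = (2 * g : ℕ) := by push_cast; rfl
    rw [Real.rpow_sub_one (by positivity), hexponent, Real.rpow_natCast]
    simp only [Pi.mul_apply, Pi.div_apply]
    rw [← mul_pow, hsplit, div_div_eq_mul_div]
  · refine .of_forall fun g => ?_
    simp [mul_assoc, ← exp_add]

theorem four_mul_rpow_three_halves {x : ℝ} (hx : 0 < x) :
    (4 * x) ^ ((3 : ℝ) / 2) = 8 * x * √x := by
  have hsqrt : √(4 * x) = 2 * √x := by
    rw [Real.sqrt_mul zero_le_four, show (4 : ℝ) = 2 ^ 2 by norm_num, Real.sqrt_sq zero_le_two]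
  rw [show (3 : ℝ) / 2 = 1 + 1 / 2 by norm_num, Real.rpow_add (by positivity), Real.rpow_one,
    ← Real.sqrt_eq_rpow, hsqrt]
  ring

theorem two_div_mul_rpow_isEquivalent :
    (fun g : ℕ => 2 / (3 * √π * (4 * g - 2) ^ ((3 : ℝ) / 2)) *
        ((12 * g - 6) / exp 1) ^ (2 * g - 1 : ℝ)) ~[atTop]
      fun g => (12 * g / exp 1) ^ (2 * g) / (144 * g ^ 2 * √(π * g)) := by
  have hconst : (fun _ : ℕ => 3 * √π) ~[atTop] fun _ => 3 * √π := .refl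
  have htwo : (fun _ : ℕ => (2 : ℝ)) ~[atTop] fun _ => 2 := .refl
  have hnonneg : (0 : ℕ → ℝ) ≤ fun g : ℕ => 4 * (g : ℝ) := fun g => by
    simp only [Pi.zero_apply]
    positivity
  refine ((htwo.div (hconst.mul (.rpow hnonneg
    (isEquivalent_mul_natCast_sub (c := 4) (by simp) 2)))).mul
      rpow_two_mul_sub_one_isEquivalent).congr_right ?_
  filter_upwards [eventually_gt_atTop 0] with g hg
  have hg' : (0 : ℝ) < g := mod_cast hg
  simp only [Pi.mul_apply, Pi.div_apply, Pi.pow_apply, four_mul_rpow_three_halves hg',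
    Real.sqrt_mul pi_nonneg]
  field_simp
  norm_num

end Asymptotics

end OneVertexTriangulation

/-- Theorem (Petri, after Penner):
`I_{g,1} ∼ (2/(3√π (4g-2)^{3/2})) ((12g-6)/e)^{2g-1}` as `g → ∞`. -/
theorem one_vertex_triangulation_count :
    Tendsto
      (fun g : ℕ =>
        (Ig1 g : ℝ) /
          (2 / (3 * Real.sqrt π * (4 * (g : ℝ) - 2) ^ ((3 : ℝ) / 2)) *
            ((12 * (g : ℝ) - 6) / Real.exp 1) ^ (2 * (g : ℝ) - 1)))
      atTop (𝓝 1) := by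
  have hIg1 := OneVertexTriangulation.Ig1_isEquivalent_mainTerm.trans
    OneVertexTriangulation.mainTerm_isEquivalent
  refine (Asymptotics.isEquivalent_iff_tendsto_one ?_).1
    (hIg1.trans OneVertexTriangulation.two_div_mul_rpow_isEquivalent.symm)
  filter_upwards [eventually_gt_atTop 0] with g hg
  have hone : (1 : ℝ) ≤ g := mod_cast hg
  have h4 : (0 : ℝ) < 4 * g - 2 := by linarith
  have h12 : (0 : ℝ) < 12 * g - 6 := by linarith
  positivity
end
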